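/- arXiv:0804.4431 — 2 statements merged into one kernel-verified Lean document; each statement's English description precedes it below -/
import Mathlib

section
/- Let r, s, t be positive integers and let X be the volume random variable on PP(r,s,t) equipped with the uniform probability distribution. Then the variance of X equals rst(r+s+t)/12. -/
/-!
The volume generating function of `PP r s t` is computed exactly, and its variance is then read off
from its factorization into `q`-integers.

Put `n = r + s`. A plane partition in the box is the free part of a Gelfand–Tsetlin pattern with `n`
rows whose top row is `(0, …, 0, t, …, t)` (`s` zeros, `r` copies of `t`): interlacing forces the
remaining entries to be `0` or `t`. Adding `i` to the `i`-th entry of each row makes the rows strictly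
increasing, and row `m` lies below row `l` exactly when `l i ≤ m i < l (i + 1)`. For the weight
`X ^ (sum of all entries below the top row)` the sum over all patterns with top row `l` is, up to
factors `X ^ k - 1`, the Vandermonde determinant of the `X ^ l i`. This follows by induction on `n`
(`pattern_sum`): summing a Vandermonde determinant row by row over the intervals `[l i, l (i + 1))`
gives geometric sums, hence differences of consecutive rows of the next Vandermonde determinant
(`vandermonde_step`). The result, `genfun_identity`, is a form of the MacMahon box formula.

For a polynomial `P` with `P(1) ≠ 0`, the second logarithmic derivative of `P (exp x)` at `x = 0` is
additive under products (`HasVar.mul`), vanishes on powers of `X`, equals `(d ^ 2 - 1) / 12` on the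
`q`-integer `1 + X + ⋯ + X ^ (d - 1)`, and is the variance on the volume generating function. Applied
to `genfun_identity` it leaves an elementary sum over pairs `j < k < n` (`sum_gaps`).
-/

open Finset

/-- Plane partitions fitting inside an `(r,s,t)`-box. -/
def PP (r s t : ℕ) : Finset (Fin r → Fin s → Fin (t + 1)) :=
  Finset.univ.filter fun p =>
    ∀ i i' : Fin r, ∀ j j' : Fin s, i ≤ i' → j ≤ j' → (p i' j' : ℕ) ≤ (p i j : ℕ)

/-- The volume of a plane partition. -/
def vol {r s t : ℕ} (p : Fin r → Fin s → Fin (t + 1)) : ℕ :=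
  ∑ i, ∑ j, (p i j : ℕ)

/-- The mean volume for the uniform distribution on `PP(r,s,t)`. -/
noncomputable def meanPP (r s t : ℕ) : ℝ :=
  (∑ p ∈ PP r s t, (vol p : ℝ)) / ((PP r s t).card : ℝ)

/-- The variance of the volume for the uniform distribution on `PP(r,s,t)`. -/
noncomputable def varPP (r s t : ℕ) : ℝ :=
  (∑ p ∈ PP r s t, ((vol p : ℝ) - meanPP r s t) ^ 2) / ((PP r s t).card : ℝ)

open Polynomial

/-! ### Gelfand–Tsetlin patterns and Vandermonde determinants -/

/-- Summing the Vandermonde determinant of `X ^ m i`, weighted by `X ^ ∑ m i`, over all `m`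
interlacing with `l` gives the Vandermonde determinant of `X ^ l i`, up to factors `X ^ k - 1`. -/
lemma vandermonde_step (n : ℕ) (l : Fin (n + 1) → ℕ) (hl : Monotone l) :
    (∑ m ∈ Fintype.piFinset (fun i : Fin n => Finset.Ico (l i.castSucc) (l i.succ)),
        (X : ℝ[X]) ^ (∑ i, m i) * (Matrix.vandermonde fun i => (X : ℝ[X]) ^ m i).det) *
      ∏ k : Fin n, ((X : ℝ[X]) ^ ((k : ℕ) + 1) - 1) =
    (Matrix.vandermonde fun i => (X : ℝ[X]) ^ l i).det := by
  -- Subtract from each row its predecessor, so that the first column becomes `(1, 0, …, 0)`.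
  have h1 : (Matrix.vandermonde fun i => (X : ℝ[X]) ^ l i).det =
      (Matrix.of fun i k : Fin n => ((X : ℝ[X]) ^ l i.succ) ^ ((k : ℕ) + 1) -
        (X ^ l i.castSucc) ^ ((k : ℕ) + 1)).det := by
    rw [Matrix.det_eq_of_forall_row_eq_smul_add_pred
      (A := Matrix.vandermonde fun i => (X : ℝ[X]) ^ l i)
      (B := Matrix.of (Fin.cons (fun k : Fin (n + 1) => ((X : ℝ[X]) ^ l 0) ^ (k : ℕ))
        (fun (i : Fin n) (k : Fin (n + 1)) => ((X : ℝ[X]) ^ l i.succ) ^ (k : ℕ) -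
          (X ^ l i.castSucc) ^ (k : ℕ)))) (fun _ => 1)]
    · rw [Matrix.det_succ_column_zero, Fin.sum_univ_succ]
      simp only [Matrix.of_apply, Fin.cons_zero, Fin.cons_succ]
      simp
      congr 1
    · intro j; simp [Matrix.vandermonde_apply]
    · intro i j; simp [Matrix.vandermonde_apply]
  have h2 : ∀ i k : Fin n, ((X : ℝ[X]) ^ l i.succ) ^ ((k : ℕ) + 1) -
        (X ^ l i.castSucc) ^ ((k : ℕ) + 1) = (X ^ ((k : ℕ) + 1) - 1) *
        ∑ m ∈ Finset.Ico (l i.castSucc) (l i.succ), X ^ m * ((X : ℝ[X]) ^ m) ^ (k : ℕ) := by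
    intro i k
    have hle : l i.castSucc ≤ l i.succ := hl (Fin.castSucc_lt_succ).le
    have := geom_sum_Ico_mul ((X : ℝ[X]) ^ ((k : ℕ) + 1)) hle
    rw [mul_comm, ← pow_mul, ← pow_mul, mul_comm (l i.succ), mul_comm (l i.castSucc), pow_mul,
      pow_mul, ← this]
    congr 1
    refine Finset.sum_congr rfl fun m _ => ?_
    ring
  rw [h1]
  simp only [h2]
  refine Eq.trans ?_ (Matrix.det_mul_row (fun k : Fin n => (X : ℝ[X]) ^ ((k : ℕ) + 1) - 1)
    (Matrix.of fun i k : Fin n => ∑ m ∈ Finset.Ico (l i.castSucc) (l i.succ),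
      X ^ m * ((X : ℝ[X]) ^ m) ^ (k : ℕ))).symm
  rw [mul_comm]
  congr 1
  have h3 := (Matrix.detRowAlternating (R := ℝ[X]) (n := Fin n)).toMultilinearMap.map_sum_finset
    (fun (i : Fin n) (m : ℕ) (k : Fin n) => (X : ℝ[X]) ^ m * ((X : ℝ[X]) ^ m) ^ (k : ℕ))
    (fun i : Fin n => Finset.Ico (l i.castSucc) (l i.succ))
  have h4 : (Matrix.of fun i k : Fin n => ∑ m ∈ Finset.Ico (l i.castSucc) (l i.succ),
      X ^ m * ((X : ℝ[X]) ^ m) ^ (k : ℕ)) = (fun i : Fin n =>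
        ∑ m ∈ Finset.Ico (l i.castSucc) (l i.succ),
        fun k : Fin n => X ^ m * ((X : ℝ[X]) ^ m) ^ (k : ℕ)) := by
    ext i k : 2
    simp [Finset.sum_apply]
  rw [h4]
  refine Eq.trans ?_ h3.symm
  refine Finset.sum_congr rfl fun m _ => ?_
  rw [← Finset.prod_pow_eq_pow_sum]
  exact (Matrix.det_mul_column (fun i => (X : ℝ[X]) ^ m i)
    (Matrix.vandermonde fun i => (X : ℝ[X]) ^ m i)).symm

/-- The generating function of triangular patterns with top row `l`. The pattern attached to `a ∈ A`
has entries `x a k i` for `i < k ≤ n`, row `k` having `k` entries. The hypotheses say that `a ↦ x a`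
is a bijection from `A` onto the patterns with strict interlacing and top row `l`. Phrasing it with an
abstract index set `A` lets the induction pass to the fibre of `A` over a given second row. -/
lemma pattern_sum {α : Type*} [DecidableEq α] (x : α → ℕ → ℕ → ℕ) (n : ℕ) :
    ∀ (l : Fin n → ℕ) (_ : StrictMono l) (A : Finset α)
    (_ : ∀ a ∈ A, ∀ i : Fin n, x a n i = l i)
    (_ : ∀ a ∈ A, ∀ k < n, ∀ i < k, x a (k + 1) i ≤ x a k i ∧ x a k i < x a (k + 1) (i + 1))
    (_ : ∀ a ∈ A, ∀ b ∈ A, (∀ k < n, ∀ i < k, x a k i = x b k i) → a = b)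
    (_ : ∀ y : ℕ → ℕ → ℕ, (∀ i : Fin n, y n i = l i) →
      (∀ k < n, ∀ i < k, y (k + 1) i ≤ y k i ∧ y k i < y (k + 1) (i + 1)) →
      ∃ a ∈ A, ∀ k < n, ∀ i < k, x a k i = y k i),
    (∑ a ∈ A, (X : ℝ[X]) ^ (∑ k ∈ range n, ∑ i ∈ range k, x a k i)) *
      ∏ k ∈ range n, ∏ j ∈ range k, ((X : ℝ[X]) ^ (j + 1) - 1) =
    (Matrix.vandermonde fun i => (X : ℝ[X]) ^ l i).det := by
  induction n with
  | zero =>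
    intro l _ A h1 h2 h3 h4
    obtain ⟨a, ha, -⟩ := h4 (fun _ _ => 0) (fun i => i.elim0) (by simp)
    have : A = {a} := by
      ext b
      simp only [mem_singleton]
      constructor
      · intro hb; exact h3 b hb a ha (by simp)
      · rintro rfl; exact ha
    simp [this]
  | succ n ih =>
    intro l hl A h1 h2 h3 h4
    rw [← vandermonde_step n l hl.monotone]
    rw [prod_range_succ, ← mul_assoc, Finset.prod_range (n := n) (fun j => (X : ℝ[X]) ^ (j + 1) - 1)]
    congr 1
    rw [← Finset.sum_fiberwise_of_maps_to (s := A)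
      (t := Fintype.piFinset (fun i : Fin n => Finset.Ico (l i.castSucc) (l i.succ)))
      (g := fun a (i : Fin n) => x a n i), sum_mul]
    · refine Finset.sum_congr rfl fun m hm => ?_
      rw [Fintype.mem_piFinset] at hm
      simp only [mem_Ico] at hm
      have hmono : StrictMono m := by
        intro i j hij
        refine (hm i).2.trans_le (le_trans (hl.monotone ?_) (hm j).1)
        rw [Fin.le_def]; simp; exact hij
      rw [← ih m hmono (A.filter fun a => (fun i : Fin n => x a n i) = m)]
      · rw [← mul_assoc, mul_sum]
        congr 1
        refine Finset.sum_congr rfl fun a ha => ?_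
        rw [sum_range_succ, pow_add, mul_comm, Finset.sum_range (n := n) (fun i => x a n i)]
        have := (mem_filter.1 ha).2
        rw [← this]
      · intro a ha i
        exact congrFun (mem_filter.1 ha).2 i
      · intro a ha k hk i hi
        exact h2 a (mem_filter.1 ha).1 k (by omega) i hi
      · intro a ha b hb hab
        refine h3 a (mem_filter.1 ha).1 b (mem_filter.1 hb).1 ?_
        intro k hk i hi
        rcases Nat.lt_succ_iff_lt_or_eq.1 hk with hk | rfl
        · exact hab k hk i hi
        · have e := congrFun ((mem_filter.1 ha).2.trans (mem_filter.1 hb).2.symm) ⟨i, hi⟩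
          exact e
      · intro y hy1 hy2
        obtain ⟨a, ha, hay⟩ := h4
          (fun k i => if k = n + 1 then (if h : i < n + 1 then l ⟨i, h⟩ else 0) else y k i)
          (by intro i; simp [show (i : ℕ) < n + 1 from i.2])
          (by
            intro k hk i hi
            rcases Nat.lt_succ_iff_lt_or_eq.1 hk with hk | rfl
            · have := hy2 k hk i hi
              simpa [show k ≠ n + 1 by omega, show k ≠ n by omega] using this
            · have := hm ⟨i, hi⟩
              rw [← hy1 ⟨i, hi⟩] at this
              simpa [show i < k + 1 by omega, hi] using this)
        refine ⟨a, mem_filter.2 ⟨ha, ?_⟩, ?_⟩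
        · funext i
          have := hay n (by omega) i i.2
          simp only [show n ≠ n + 1 by omega, if_false] at this
          rw [this, hy1]
        · intro k hk i hi
          have := hay k (by omega) i hi
          simpa [show k ≠ n + 1 by omega] using this
    · intro a ha
      rw [Fintype.mem_piFinset]
      intro i
      have := h2 a ha n (by omega) i i.2
      have e1 := h1 a ha i.castSucc
      have e2 := h1 a ha i.succ
      simp only [Fin.val_castSucc, Fin.val_succ] at e1 e2
      rw [mem_Ico, ← e1, ← e2]
      exact this

/-! ### Plane partitions as patterns -/

/-- The plane partition `p`, with its second coordinate reversed and extended by the forced values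
`t` (for `a ≥ s`) and `0` (for `a < s`, `b ≥ r`), so that it is increasing in `a` and decreasing
in `b`. -/
def stair {r s t : ℕ} (p : Fin r → Fin s → Fin (t + 1)) (a b : ℕ) : ℕ :=
  if a < s then
    if h : b < r ∧ s - 1 - a < s then (p ⟨b, h.1⟩ ⟨s - 1 - a, h.2⟩ : ℕ) else 0
  else t

lemma stair_anti {r s t : ℕ} {p : Fin r → Fin s → Fin (t + 1)} (hp : p ∈ PP r s t) (a b : ℕ) :
    stair p a (b + 1) ≤ stair p a b := by
  have hp := (mem_filter.1 hp).2
  unfold stair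
  split_ifs <;> first | omega | skip
  exact hp _ _ _ _ (by simp) le_rfl

lemma stair_mono {r s t : ℕ} {p : Fin r → Fin s → Fin (t + 1)} (hp : p ∈ PP r s t) (a b : ℕ) :
    stair p a b ≤ stair p (a + 1) b := by
  have hp := (mem_filter.1 hp).2
  unfold stair
  split_ifs <;> first | omega | skip
  exact hp _ _ _ _ le_rfl (by simp [Fin.le_def]; omega)

/-- The pattern of `p`: row `k` is the antidiagonal `a + b = k - 1` of `stair p`, with `i` added to
the `i`-th entry. Only the entries with `i < k` are meaningful. -/
def gt {r s t : ℕ} (p : Fin r → Fin s → Fin (t + 1)) (k i : ℕ) : ℕ :=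
  i + stair p i (k - 1 - i)

/-- The top row `(0, …, 0, t, …, t)`, with `s` zeros, shifted by `i` in position `i`. -/
def topRow (s t i : ℕ) : ℕ := i + if i < s then 0 else t

/-- The weight of the pattern of `p` is the volume of `p`, up to a constant independent of `p`. -/
lemma weight_eq {r s t : ℕ} (p : Fin r → Fin s → Fin (t + 1)) :
    ∑ k ∈ range (r + s), ∑ i ∈ range k, gt p k i =
      vol p + ∑ k ∈ range (r + s), ∑ i ∈ range k, topRow s t i := by
  have h : ∀ k i, gt p k i =
      (if h : i < s ∧ k - 1 - i < r ∧ s - 1 - i < s then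
        (p ⟨k - 1 - i, h.2.1⟩ ⟨s - 1 - i, h.2.2⟩ : ℕ) else 0) + topRow s t i := by
    intro k i
    unfold gt stair topRow
    split_ifs <;> omega
  simp only [h, sum_add_distrib]
  congr 1
  unfold vol
  rw [Finset.sum_sigma', ← Finset.sum_product' univ univ (fun i j => (p i j : ℕ))]
  symm
  refine Finset.sum_of_injOn (fun bc : Fin r × Fin s =>
    (⟨s - 1 - bc.2 + bc.1 + 1, s - 1 - bc.2⟩ : (_ : ℕ) × ℕ)) ?_ ?_ ?_ ?_
  · rintro ⟨b, c⟩ - ⟨b', c'⟩ - h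
    simp only [Sigma.mk.injEq, heq_eq_eq] at h
    ext <;> simp <;> omega
  · rintro ⟨b, c⟩ -
    simp
    omega
  · rintro ⟨k, i⟩ hk hn
    simp only [mem_sigma, mem_range] at hk
    apply dif_neg
    rintro ⟨h1, h2, h3⟩
    simp only at h1 h2 h3
    apply hn
    refine ⟨(⟨k - 1 - i, h2⟩, ⟨s - 1 - i, h3⟩), by simp, ?_⟩
    simp only [Sigma.mk.injEq, heq_eq_eq]
    omega
  · rintro ⟨b, c⟩ -
    have e1 : s - 1 - (c : ℕ) + b + 1 - 1 - (s - 1 - c) = b := by omega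
    have e2 : s - 1 - (s - 1 - (c : ℕ)) = c := by omega
    simp only [e1, e2]
    rw [dif_pos]
    omega

/-- `pattern_sum` for the patterns of plane partitions. -/
lemma pp_identity (r s t : ℕ) :
    (∑ p ∈ PP r s t, (X : ℝ[X]) ^ (∑ k ∈ range (r + s), ∑ i ∈ range k, gt p k i)) *
      ∏ k ∈ range (r + s), ∏ j ∈ range k, ((X : ℝ[X]) ^ (j + 1) - 1) =
    (Matrix.vandermonde fun i : Fin (r + s) => (X : ℝ[X]) ^ topRow s t i).det := by
  classical
  refine pattern_sum gt (r + s) _ ?_ _ ?_ ?_ ?_ ?_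
  · intro i j hij
    have : (i : ℕ) < j := hij
    simp only [topRow]
    split_ifs <;> omega
  · intro p _ i
    simp only [gt, topRow, stair]
    have := i.2
    split_ifs <;> omega
  · intro p hp k hk i hi
    have h1 := stair_anti hp i (k - 1 - i)
    have h2 := stair_mono hp i (k - 1 - i)
    unfold gt
    rw [show k + 1 - 1 - i = k - 1 - i + 1 by omega,
      show k + 1 - 1 - (i + 1) = k - 1 - i by omega]
    omega
  · intro p _ q _ h
    ext b c
    have := h (s - 1 - c + b + 1) (by omega) (s - 1 - c) (by omega)
    have e1 : s - 1 - (c : ℕ) + b + 1 - 1 - (s - 1 - c) = b := by omega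
    have e2 : s - 1 - (s - 1 - (c : ℕ)) = c := by omega
    have e3 : s - 1 - (c : ℕ) < s := by omega
    simp only [gt, stair, e1, e2] at this
    simpa [e3] using this
  · intro y hy1 hy2
    -- `hlow` and `hupp` follow the two chains of inequalities from an entry up to the top row; they
    -- force the entries outside the `r × s` rectangle and bound the others by `0` and `t`.
    have hA : ∀ d k i, i < k → k + d ≤ r + s → y (k + d) i ≤ y k i := by
      intro d
      induction d with
      | zero => intros; simp
      | succ d ih =>
        intro k i hi hk
        exact le_trans (hy2 (k + d) (by omega) i (by omega)).1 (ih k i hi (by omega))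
    have hB : ∀ d k i, i < k → k + d ≤ r + s → y k i + d ≤ y (k + d) (i + d) := by
      intro d
      induction d with
      | zero => intros; simp
      | succ d ih =>
        intro k i hi hk
        have h1 := (hy2 (k + d) (by omega) (i + d) (by omega)).2
        have h2 := ih k i hi (by omega)
        rw [← add_assoc, ← add_assoc, ← add_assoc]
        omega
    have hlow : ∀ k i, i < k → k ≤ r + s → topRow s t i ≤ y k i := by
      intro k i hi hk
      have := hA (r + s - k) k i hi (by omega)
      rw [show k + (r + s - k) = r + s by omega] at this
      rwa [hy1 ⟨i, by omega⟩] at this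
    have hupp : ∀ k i, i < k → k ≤ r + s →
        y k i + (r + s - k) ≤ topRow s t (i + (r + s - k)) := by
      intro k i hi hk
      have := hB (r + s - k) k i hi (by omega)
      rw [show k + (r + s - k) = r + s by omega] at this
      rwa [hy1 ⟨i + (r + s - k), by omega⟩] at this
    have hle : ∀ k i, i < k → k ≤ r + s → i ≤ y k i ∧ y k i ≤ i + t := by
      intro k i hi hk
      have h1 := hlow k i hi hk
      have h2 := hupp k i hi hk
      unfold topRow at h1 h2
      split_ifs at h1 h2 <;> omega
    refine ⟨fun b c => ⟨y (s - 1 - c + b + 1) (s - 1 - c) - (s - 1 - c), ?_⟩, ?_, ?_⟩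
    · have := hle (s - 1 - c + b + 1) (s - 1 - c) (by omega) (by omega)
      omega
    · refine mem_filter.2 ⟨mem_univ _, ?_⟩
      intro b b' c c' hb hc
      have hb : (b : ℕ) ≤ b' := hb
      have hc : (c : ℕ) ≤ c' := hc
      have h1 := hA (b' - b) (s - 1 - c' + b + 1) (s - 1 - c') (by omega) (by omega)
      have h2 := hB (c' - c) (s - 1 - c' + b + 1) (s - 1 - c') (by omega) (by omega)
      rw [show s - 1 - (c' : ℕ) + b + 1 + (b' - b) = s - 1 - c' + b' + 1 by omega] at h1
      rw [show s - 1 - (c' : ℕ) + b + 1 + (c' - c) = s - 1 - c + b + 1 by omega,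
        show s - 1 - (c' : ℕ) + (c' - c) = s - 1 - c by omega] at h2
      simp only
      omega
    · intro k hk i hi
      have h1 := hlow k i hi hk.le
      have h2 := hupp k i hi hk.le
      have h3 := hle k i hi hk.le
      unfold topRow at h1 h2
      unfold gt stair
      split_ifs with c1 c2
      · simp only
        rw [show s - 1 - (s - 1 - i) = i by omega, show i + (k - 1 - i) + 1 = k by omega]
        omega
      · split_ifs at h1 h2 <;> omega
      · split_ifs at h1 h2 <;> omega

lemma vandermonde_range (n : ℕ) (v : ℕ → ℝ[X]) :
    (Matrix.vandermonde fun i : Fin n => v i).det =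
      ∏ k ∈ range n, ∏ j ∈ range k, (v k - v j) := by
  rw [Matrix.det_vandermonde, Finset.prod_range,
    Finset.prod_comm' (t' := univ) (s' := fun j => Finset.Iio j) (by simp)]
  refine Finset.prod_congr rfl fun k _ => ?_
  rw [← Nat.Iio_eq_range, ← Fin.map_valEmbedding_Iio, Finset.prod_map]
  rfl

/-! ### The variance functional on polynomials -/

/-- The `q`-integer `1 + X + ⋯ + X ^ (d - 1)`. -/
noncomputable def qint (d : ℕ) : ℝ[X] := ∑ k ∈ range d, X ^ k

/-- `P(1) ≠ 0`, and `v` is the second derivative of `log P(exp x)` at `x = 0`. If `P` has nonnegative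
coefficients, `v` is the variance of the distribution on exponents proportional to them. -/
def HasVar (P : ℝ[X]) (v : ℝ) : Prop :=
  P.eval 1 ≠ 0 ∧ v = (derivative (derivative P)).eval 1 / P.eval 1 +
    (derivative P).eval 1 / P.eval 1 - ((derivative P).eval 1 / P.eval 1) ^ 2

lemma HasVar.mul {P Q : ℝ[X]} {v w : ℝ} (hP : HasVar P v) (hQ : HasVar Q w) :
    HasVar (P * Q) (v + w) := by
  obtain ⟨hP, rfl⟩ := hP
  obtain ⟨hQ, rfl⟩ := hQ
  refine ⟨by simp [hP, hQ], ?_⟩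
  simp only [derivative_mul, derivative_add, eval_add, eval_mul]
  field_simp
  ring

lemma HasVar.prod {ι : Type*} (S : Finset ι) (P : ι → ℝ[X]) (v : ι → ℝ)
    (h : ∀ i ∈ S, HasVar (P i) (v i)) : HasVar (∏ i ∈ S, P i) (∑ i ∈ S, v i) := by
  classical
  induction S using Finset.induction_on with
  | empty => simp [HasVar]
  | insert a S ha ih =>
    rw [prod_insert ha, sum_insert ha]
    exact (h a (by simp)).mul (ih fun i hi => h i (by simp [hi]))

lemma HasVar.X_pow (c : ℕ) : HasVar (X ^ c) 0 := by
  refine ⟨by simp, ?_⟩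
  rcases c with _ | c
  · simp
  · rcases c with _ | c
    · simp
    · simp; ring

lemma HasVar.qint {d : ℕ} (hd : 0 < d) : HasVar (qint d) (((d : ℝ) ^ 2 - 1) / 12) := by
  have h0 : (_root_.qint d).eval 1 = d := by simp [_root_.qint, eval_finsetSum]
  have h1 : (derivative (_root_.qint d)).eval 1 = (d : ℝ) * (d - 1) / 2 := by
    clear h0 hd
    unfold _root_.qint
    induction d with
    | zero => simp
    | succ d ih =>
      rw [sum_range_succ, derivative_add, eval_add, ih]; simp [derivative_X_pow]; ring
  have h2 : (derivative (derivative (_root_.qint d))).eval 1 =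
      (d : ℝ) * (d - 1) * (d - 2) / 3 := by
    clear h0 h1 hd
    unfold _root_.qint
    induction d with
    | zero => simp
    | succ d ih =>
      rw [sum_range_succ, derivative_add, derivative_add, eval_add, ih]
      rcases d with _ | d
      · simp
      · simp [derivative_X_pow]; ring
  have hd' : (d : ℝ) ≠ 0 := by positivity
  refine ⟨by rw [h0]; exact hd', ?_⟩
  rw [h0, h1, h2]
  field_simp
  ring

lemma HasVar.unique {P : ℝ[X]} {v w : ℝ} (hv : HasVar P v) (hw : HasVar P w) : v = w :=
  hv.2.trans hw.2.symm

/-! ### The box formula and the variance -/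

lemma sub_one_mul_qint (d : ℕ) : (X : ℝ[X]) ^ d - 1 = (X - 1) * qint d :=
  (mul_geom_sum X d).symm

lemma topRow_lt {s t j k : ℕ} (h : j < k) : topRow s t j < topRow s t k := by
  unfold topRow; split_ifs <;> omega

/-- The MacMahon box formula, with all factors `X - 1` cancelled and not otherwise simplified. -/
lemma genfun_identity (r s t : ℕ) :
    (∑ p ∈ PP r s t, (X : ℝ[X]) ^ vol p) *
      (X ^ (∑ k ∈ range (r + s), ∑ i ∈ range k, topRow s t i) *
      ∏ k ∈ range (r + s), ∏ j ∈ range k, qint (k - j)) =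
    ∏ k ∈ range (r + s), ∏ j ∈ range k,
      (X ^ topRow s t j * qint (topRow s t k - topRow s t j)) := by
  have h := pp_identity r s t
  rw [vandermonde_range _ fun i => (X : ℝ[X]) ^ topRow s t i] at h
  simp only [weight_eq, pow_add, ← sum_mul] at h
  have e1 : ∏ k ∈ range (r + s), ∏ j ∈ range k, ((X : ℝ[X]) ^ (j + 1) - 1) =
      (∏ k ∈ range (r + s), ∏ j ∈ range k, (X - 1)) *
      ∏ k ∈ range (r + s), ∏ j ∈ range k, qint (k - j) := by
    simp only [← prod_mul_distrib, ← sub_one_mul_qint]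
    refine prod_congr rfl fun k _ => ?_
    rw [← prod_range_reflect]
    refine prod_congr rfl fun j hj => ?_
    rw [mem_range] at hj
    rw [show k - 1 - j + 1 = k - j by omega]
  have e2 : ∏ k ∈ range (r + s), ∏ j ∈ range k, ((X : ℝ[X]) ^ topRow s t k - X ^ topRow s t j) =
      (∏ k ∈ range (r + s), ∏ j ∈ range k, (X - 1)) * ∏ k ∈ range (r + s), ∏ j ∈ range k,
      (X ^ topRow s t j * qint (topRow s t k - topRow s t j)) := by
    simp only [← prod_mul_distrib]
    refine prod_congr rfl fun k _ => prod_congr rfl fun j hj => ?_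
    rw [mul_left_comm, ← sub_one_mul_qint, mul_sub, mul_one, ← pow_add,
      Nat.add_sub_cancel' (topRow_lt (mem_range.1 hj)).le]
  simp only [pow_add] at e1
  rw [e1, e2] at h
  have hne : (∏ k ∈ range (r + s), ∏ j ∈ range k, ((X : ℝ[X]) - 1)) ≠ 0 := by
    refine prod_ne_zero_iff.2 fun k _ => prod_ne_zero_iff.2 fun j _ => ?_
    exact X_sub_C_ne_zero (1 : ℝ)
  apply mul_left_cancel₀ hne
  rw [← h]
  ring

/-- The difference of the values of the variance functional on the two sides of `genfun_identity`. Only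
the pairs `j < s ≤ k` contribute, each with `((k - j + t) ^ 2 - (k - j) ^ 2) / 12`. -/
lemma sum_gaps (r s t : ℕ) :
    ∑ k ∈ range (r + s), ∑ j ∈ range k,
      ((0 + (((topRow s t k - topRow s t j : ℕ) : ℝ) ^ 2 - 1) / 12) -
        (((k - j : ℕ) : ℝ) ^ 2 - 1) / 12) = (r * s * t * (r + s + t) : ℝ) / 12 := by
  have h : ∀ k, ∀ j ∈ range k, ((0 + (((topRow s t k - topRow s t j : ℕ) : ℝ) ^ 2 - 1) / 12) -
        (((k - j : ℕ) : ℝ) ^ 2 - 1) / 12) =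
      if j < s ∧ s ≤ k then (t * (2 * (k - j) + t) : ℝ) / 12 else 0 := by
    intro k j hj
    have hj := mem_range.1 hj
    rw [Nat.cast_sub (topRow_lt hj).le, Nat.cast_sub hj.le]
    unfold topRow
    split_ifs <;> first | omega | (push_cast; ring)
  rw [sum_congr rfl fun k _ => sum_congr rfl (h k), add_comm r s, sum_range_add]
  have hz : ∑ k ∈ range s, ∑ j ∈ range k,
      (if j < s ∧ s ≤ k then (t * (2 * (k - j) + t) : ℝ) / 12 else 0) = 0 := by
    refine sum_eq_zero fun k hk => sum_eq_zero fun j _ => if_neg ?_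
    have := mem_range.1 hk
    omega
  have hi : ∀ b, ∑ j ∈ range (s + b), (if j < s ∧ s ≤ s + b then
      (t * (2 * (((s + b : ℕ) : ℝ) - j) + t) : ℝ) / 12 else 0) =
      (s * t * (s + 2 * b + 1 + t) : ℝ) / 12 := by
    intro b
    rw [sum_range_add, sum_eq_zero (s := range b) (fun j _ => if_neg (by omega)), add_zero]
    have : ∀ m ≤ s, ∑ j ∈ range m, (if j < s ∧ s ≤ s + b then
      (t * (2 * (((s + b : ℕ) : ℝ) - j) + t) : ℝ) / 12 else 0) =
      (m * t * (2 * (s + b) - (m - 1) + t) : ℝ) / 12 := by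
      intro m
      induction m with
      | zero => simp
      | succ m ih =>
        intro hm
        rw [sum_range_succ, ih (by omega), if_pos (by omega)]
        push_cast; ring
    rw [this s le_rfl]
    ring
  rw [hz, zero_add]
  simp only [hi]
  clear hz hi h
  induction r with
  | zero => simp
  | succ r ih => rw [sum_range_succ, ih]; push_cast; ring

lemma hasVar_genfun (r s t : ℕ) :
    HasVar (∑ p ∈ PP r s t, (X : ℝ[X]) ^ vol p) (varPP r s t) := by
  set F := ∑ p ∈ PP r s t, (X : ℝ[X]) ^ vol p with hF
  have h0 : F.eval 1 = ((PP r s t).card : ℝ) := by simp [hF, eval_finsetSum]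
  have h1 : (derivative F).eval 1 = ∑ p ∈ PP r s t, (vol p : ℝ) := by
    simp [hF, eval_finsetSum, derivative_X_pow]
  have h2 : (derivative (derivative F)).eval 1 = ∑ p ∈ PP r s t, ((vol p : ℝ) ^ 2 - vol p) := by
    rw [hF, derivative_sum, derivative_sum, eval_finsetSum]
    refine sum_congr rfl fun p _ => ?_
    rcases vol p with _ | n
    · simp
    · simp [derivative_X_pow]; ring
  have hne : ((PP r s t).card : ℝ) ≠ 0 := by
    have : (PP r s t).Nonempty := ⟨fun _ _ => 0, by simp [PP]⟩
    exact_mod_cast this.card_pos.ne'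
  refine ⟨by rw [h0]; exact hne, ?_⟩
  rw [h0, h1, h2, varPP, meanPP]
  simp only [sub_sq, sum_add_distrib, sum_sub_distrib, ← sum_mul, ← mul_sum, sum_const,
    nsmul_eq_mul]
  field_simp
  ring

/-- The variance of the volume of a uniformly random plane partition in an
`(r,s,t)`-box equals `rst(r+s+t)/12`. -/
theorem variance_volume_PP (r s t : ℕ) (hr : 0 < r) (hs : 0 < s) (ht : 0 < t) :
    varPP r s t = (r * s * t * (r + s + t) : ℝ) / 12 := by
  have hL := (hasVar_genfun r s t).mul
    ((HasVar.X_pow (∑ k ∈ range (r + s), ∑ i ∈ range k, topRow s t i)).mul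
      (HasVar.prod (range (r + s)) (fun k => ∏ j ∈ range k, qint (k - j)) _ fun k _ =>
        HasVar.prod (range k) (fun j => qint (k - j)) _ fun j hj =>
          HasVar.qint (Nat.sub_pos_of_lt (mem_range.1 hj))))
  rw [genfun_identity] at hL
  have hR := HasVar.prod (range (r + s)) (fun k => ∏ j ∈ range k,
      (X ^ topRow s t j * qint (topRow s t k - topRow s t j))) _ fun k _ =>
        HasVar.prod (range k) (fun j => X ^ topRow s t j * qint (topRow s t k - topRow s t j)) _
          fun j hj => (HasVar.X_pow (topRow s t j)).mul
            (HasVar.qint (Nat.sub_pos_of_lt (topRow_lt (mem_range.1 hj))))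
  have h := hL.unique hR
  have hg := sum_gaps r s t
  simp only [sum_sub_distrib] at hg
  linarith
end

section
/- Let r be a positive integer and let X be the volume random variable on CSPP(r) equipped with the uniform probability distribution. Then the variance of X equals (3/4)r⁴ − (1/2)r². -/
/-!
The volume generating function of `CSPP(r)` is a determinant, and the mean and the variance are read
off from its second-order expansion at `q = 1`.

*Determinant.* For a cyclically symmetric set of cubes let `n(a, b)` be the number of its cubes on the
diagonal `(k + a, k + b, k)`. The array `n` determines the set of cubes, and for fixed `b` the sequence
`n(·, b)` has descents at most one. Its descent set `c_b ⊂ {0, …, r - 1}` is a particle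
configuration; consecutive configurations interlace, `#c_b` is the number of elements of `c_0` that
are at least `b`, and the volume is `#c_0 + 3 ∑_b ∑_{x ∈ c_b} x` (`vol_eq`). Such chains of
configurations are families of non-intersecting lattice paths starting and ending at `c_0`, so the
Lindström–Gessel–Viennot argument (`lgv`) turns the sum over chains with given `c_0` into a principal
minor, and the sum over all of them into `det (1 + q P)`, where `P` is a `Q`-Pascal matrix with
`Q = q ^ 3` (`sum_cspp_eq_det`). Conjugation by a diagonal matrix makes `P` symmetric.

*Expansion at `q = 1`.* Write `M = 1 + B`, where `B` is the Pascal matrix `binom(i + j, i)`. The first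
two derivatives of `q P` at `q = 1` are given by commutators of `B` and its derivative with
antisymmetric bidiagonal matrices, for the infinite matrices. After truncation to size `r` rank-two
boundary terms remain (`commutator_trunc`), and only these contribute to the derivatives of `log det`
(`logdet_derivs`). The boundary terms involve `M⁻¹` through the sequences `f_n` obtained by
Gram–Schmidt from the form `M`. Two symmetric tridiagonal operators commuting with `B`
(`tri_Z_comm`, `tri_T_comm`) give three-term relations for `f_n`; together with a parity
symmetry (`orth_parity`) they determine the ratios of the norms (`ratio_eq`) and all the coefficients
that are needed. The outcome is `jets_value`: the first two derivatives of `log det` are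
`r ^ 3 / 2` and `3 / 4 * r ^ 4 - 1 / 2 * r ^ 2`, the mean and the variance.
-/

open Finset

/-- Cyclically symmetric plane partitions inside an `(r,r,r)`-box: the cube
`(i,j,k)` belongs to the pile iff `(k,i,j)` does (0-based: `k < p i j ↔ j < p k i`). -/
def CSPP (r : ℕ) : Finset (Fin r → Fin r → Fin (r + 1)) :=
  (PP r r r).filter fun p =>
    ∀ i j k : Fin r, ((k : ℕ) < (p i j : ℕ) ↔ (j : ℕ) < (p k i : ℕ))

/-- The mean volume for the uniform distribution on `CSPP(r)`. -/
noncomputable def meanCSPP (r : ℕ) : ℝ :=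
  (∑ p ∈ CSPP r, (vol p : ℝ)) / ((CSPP r).card : ℝ)

/-- The variance of the volume for the uniform distribution on `CSPP(r)`. -/
noncomputable def varCSPP (r : ℕ) : ℝ :=
  (∑ p ∈ CSPP r, ((vol p : ℝ) - meanCSPP r) ^ 2) / ((CSPP r).card : ℝ)

/-! ### The Pascal matrix and its commutators -/

/-- The entries `binom(i+j, i)` of the (infinite) symmetric Pascal matrix. -/
noncomputable def pascal (i j : ℕ) : ℝ := ((i + j).choose i : ℝ)

lemma pascal_symm (i j : ℕ) : pascal i j = pascal j i := by
  unfold pascal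
  rw [Nat.add_comm j i, Nat.choose_symm_add]

lemma pascal_zero_left (j : ℕ) : pascal 0 j = 1 := by simp [pascal]

lemma pascal_zero_right (i : ℕ) : pascal i 0 = 1 := by simp [pascal]

lemma pascal_succ_left (i j : ℕ) :
    pascal (i + 1) j = (i + j + 1) / (i + 1) * pascal i j := by
  have h := Nat.add_one_mul_choose_eq (i + j) i
  have h' : ((i : ℝ) + j + 1) * pascal i j = pascal (i + 1) j * (i + 1) := by
    unfold pascal
    rw [show i + 1 + j = i + j + 1 by ring]
    exact_mod_cast h
  field_simp
  linarith

lemma pascal_succ_right (i j : ℕ) :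
    pascal i (j + 1) = (i + j + 1) / (j + 1) * pascal i j := by
  rw [pascal_symm, pascal_succ_left, pascal_symm j i, add_comm (j : ℝ) i]

/-- The symmetric tridiagonal operator with diagonal `d` and off-diagonal entries `a k` in
positions `(k, k - 1)` and `(k - 1, k)`; it is always used with `a 0 = 0`, so that the
truncated subtraction is harmless. -/
def tri (a d f : ℕ → ℝ) (i : ℕ) : ℝ := a i * f (i - 1) + d i * f i + a (i + 1) * f (i + 1)

/-- The antisymmetric analogue of `tri`. -/
def skew (a f : ℕ → ℝ) (i : ℕ) : ℝ := a i * f (i - 1) - a (i + 1) * f (i + 1)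

/-- The Pascal matrix commutes with the tridiagonal operator with weights `k`. -/
lemma tri_Z_comm (i j : ℕ) :
    tri (fun k => k) (fun k => -k) (pascal i) j =
      tri (fun k => k) (fun k => -k) (fun k => pascal k j) i := by
  unfold tri
  rcases i with _ | i <;> rcases j with _ | j <;>
    simp only [Nat.add_sub_cancel, pascal_succ_left, pascal_succ_right, pascal_zero_left,
      pascal_zero_right] <;> push_cast <;> field_simp <;> ring

/-- The Pascal matrix commutes with the tridiagonal operator with weights `k ^ 3`. -/
lemma tri_T_comm (i j : ℕ) :
    tri (fun k => k ^ 3) (fun k => -(2 * k ^ 3 + 3 * k ^ 2 + 2 * k)) (pascal i) j =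
      tri (fun k => k ^ 3) (fun k => -(2 * k ^ 3 + 3 * k ^ 2 + 2 * k))
        (fun k => pascal k j) i := by
  unfold tri
  rcases i with _ | i <;> rcases j with _ | j <;>
    simp only [Nat.add_sub_cancel, pascal_succ_left, pascal_succ_right, pascal_zero_left,
      pascal_zero_right] <;> push_cast <;> field_simp <;> ring

/-- First derivative, with respect to `q d/dq` at `q = 1`, of the `q`-deformed Pascal matrix `qA`. -/
noncomputable def pascal' (i j : ℕ) : ℝ :=
  pascal i j * (3 / 2 * (i + 1) * (j + 1) - 1 / 2)

/-- Second derivative, with respect to `q d/dq` at `q = 1`, of the `q`-deformed Pascal matrix `qA`. -/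
noncomputable def pascalSnd (i j : ℕ) : ℝ :=
  pascal i j * ((3 / 2 * (i + 1) * (j + 1) - 1 / 2) ^ 2 + 3 / 4 * i * j * (i + j + 1))

/-- The first derivative of the deformed Pascal matrix is a commutator of the Pascal matrix. -/
lemma pascal'_eq (i j : ℕ) :
    pascal' i j = - skew (fun k => k ^ 2 / 2) (pascal i) j
      - skew (fun k => k ^ 2 / 2) (fun k => pascal k j) i := by
  unfold skew pascal'
  rcases i with _ | i <;> rcases j with _ | j <;>
    simp only [Nat.add_sub_cancel, pascal_succ_left, pascal_succ_right, pascal_zero_left,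
      pascal_zero_right] <;> push_cast <;> field_simp <;> ring

/-- The second derivative is a commutator with the first one plus one with the Pascal matrix. -/
lemma pascalSnd_eq (i j : ℕ) :
    pascalSnd i j = - skew (fun k => k ^ 2 / 2) (pascal' i) j
      - skew (fun k => k ^ 2 / 2) (fun k => pascal' k j) i
      - skew (fun k => -(3 / 4 * k ^ 3)) (pascal i) j
      - skew (fun k => -(3 / 4 * k ^ 3)) (fun k => pascal k j) i := by
  unfold skew pascal' pascalSnd
  rcases i with _ | i <;> rcases j with _ | j <;>
    simp only [Nat.add_sub_cancel, pascal_succ_left, pascal_succ_right, pascal_zero_left,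
      pascal_zero_right] <;> push_cast <;> field_simp <;> ring

/-! ### Orthogonal sequences for the Pascal matrix -/

/-- Vandermonde's identity: the Pascal matrix is a Gram matrix. -/
lemma pascal_gram (i j n : ℕ) (hi : i < n) :
    pascal i j = ∑ k ∈ range n, (i.choose k : ℝ) * (j.choose k : ℝ) := by
  have h1 : (i + j).choose i = ∑ k ∈ range (i + 1), i.choose k * j.choose k := by
    rw [Nat.add_choose_eq, Finset.Nat.sum_antidiagonal_eq_sum_range_succ_mk,
      ← Finset.sum_range_reflect]
    refine Finset.sum_congr rfl fun k hk => ?_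
    have hk' : k ≤ i := by simp at hk; omega
    rw [show i.succ - 1 - k = i - k by omega, Nat.sub_sub_self hk', Nat.choose_symm hk']
  have h2 : ∑ k ∈ range n, i.choose k * j.choose k
      = ∑ k ∈ range (i + 1), i.choose k * j.choose k := by
    symm
    refine Finset.sum_subset (by intro x; simp; omega) fun k _ hk => ?_
    rw [Nat.choose_eq_zero_of_lt (by simpa using hk), zero_mul]
  unfold pascal
  rw [h1, ← h2]
  push_cast
  rfl

/-- The operator `1 + B`, with `B` the Pascal matrix, on sequences supported on `{0,…,n-1}`. -/
noncomputable def Mop (n : ℕ) (f : ℕ → ℝ) (i : ℕ) : ℝ :=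
  f i + ∑ k ∈ range n, pascal i k * f k

lemma Mop_mono {n n' : ℕ} {f : ℕ → ℝ} (hf : ∀ k, n ≤ k → f k = 0) (hn : n ≤ n') (i : ℕ) :
    Mop n' f i = Mop n f i := by
  unfold Mop
  congr 1
  symm
  refine Finset.sum_subset (by intro x; simp; omega) fun k _ hk => ?_
  rw [hf k (by simpa using hk), mul_zero]

lemma Mop_lin (n : ℕ) (f g : ℕ → ℝ) (a b : ℝ) (i : ℕ) :
    Mop n (fun k => a * f k + b * g k) i = a * Mop n f i + b * Mop n g i := by
  unfold Mop
  rw [mul_add, mul_add, Finset.mul_sum, Finset.mul_sum]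
  have : ∑ k ∈ range n, pascal i k * (a * f k + b * g k) =
    ∑ k ∈ range n, a * (pascal i k * f k) + ∑ k ∈ range n, b * (pascal i k * g k) := by
    rw [← Finset.sum_add_distrib]
    exact Finset.sum_congr rfl fun k _ => by ring
  rw [this]; ring

/-- `1 + B` is positive definite, hence injective on each truncation. -/
lemma Mop_inj {n : ℕ} {g : ℕ → ℝ} (hg : ∀ k, n ≤ k → g k = 0)
    (h : ∀ i < n, Mop n g i = 0) : g = 0 := by
  have h0 : ∑ i ∈ range n, g i * Mop n g i = 0 :=
    Finset.sum_eq_zero fun i hi => by rw [h i (by simpa using hi), mul_zero]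
  have h1 : ∑ i ∈ range n, g i * Mop n g i =
      ∑ i ∈ range n, g i ^ 2 + ∑ k ∈ range n, (∑ i ∈ range n, (i.choose k : ℝ) * g i) ^ 2 := by
    have : ∀ k, (∑ i ∈ range n, (i.choose k : ℝ) * g i) ^ 2 =
        ∑ i ∈ range n, ∑ j ∈ range n, ((i.choose k : ℝ) * g i) * ((j.choose k : ℝ) * g j) := by
      intro k; rw [sq, Finset.sum_mul_sum]
    simp_rw [this]
    rw [Finset.sum_comm, ← Finset.sum_add_distrib]
    refine Finset.sum_congr rfl fun i hi => ?_
    rw [Finset.sum_comm, Mop, mul_add, Finset.mul_sum, sq]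
    congr 1
    refine Finset.sum_congr rfl fun j hj => ?_
    rw [pascal_gram i j n (by simpa using hi), Finset.sum_mul, Finset.mul_sum]
    exact Finset.sum_congr rfl fun k _ => by ring
  have h2 : ∑ i ∈ range n, g i ^ 2 ≤ 0 := by
    have : 0 ≤ ∑ k ∈ range n, (∑ i ∈ range n, (i.choose k : ℝ) * g i) ^ 2 :=
      Finset.sum_nonneg fun k _ => sq_nonneg _
    linarith
  have h3 : ∑ i ∈ range n, g i ^ 2 = 0 :=
    le_antisymm h2 (Finset.sum_nonneg fun k _ => sq_nonneg _)
  rw [Finset.sum_eq_zero_iff_of_nonneg (fun k _ => sq_nonneg _)] at h3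
  funext k
  by_cases hk : k < n
  · simpa using h3 k (by simpa using hk)
  · exact hg k (by omega)

/-- The `n × n` truncation of `1 + B`. -/
noncomputable def MM (n : ℕ) : Matrix (Fin n) (Fin n) ℝ :=
  1 + Matrix.of fun i j : Fin n => pascal i j

lemma MM_mulVec (n : ℕ) (f : ℕ → ℝ) (i : Fin n) :
    ((MM n).mulVec fun k => f k) i = Mop n f i := by
  unfold MM Mop
  rw [Matrix.add_mulVec, Matrix.one_mulVec, Pi.add_apply]
  congr 1
  rw [Matrix.mulVec, dotProduct]
  exact (Finset.sum_range fun k => pascal i k * f k).symm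

lemma MM_det_ne_zero (n : ℕ) : (MM n).det ≠ 0 := by
  intro h
  obtain ⟨v, hv, hv'⟩ := Matrix.exists_mulVec_eq_zero_iff.mpr h
  let g : ℕ → ℝ := fun k => if hk : k < n then v ⟨k, hk⟩ else 0
  have hgv : (fun k : Fin n => g k) = v := by
    funext k; simp [g]
  have hg : g = 0 := by
    refine Mop_inj (n := n) (fun k hk => by simp [g]; omega) fun i hi => ?_
    rw [← MM_mulVec n g ⟨i, hi⟩, hgv, hv']; rfl
  apply hv
  rw [← hgv, hg]; rfl

/-- The monic orthogonal sequence of degree `r`. -/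
structure IsOrth (r : ℕ) (f : ℕ → ℝ) : Prop where
  top : f r = 1
  supp : ∀ k, r + 1 ≤ k → f k = 0
  orth : ∀ i < r, Mop (r + 1) f i = 0

lemma exists_orth (r : ℕ) : ∃ f, IsOrth r f := by
  let w : Fin r → ℝ := (MM r)⁻¹.mulVec fun i => pascal i r
  let f : ℕ → ℝ := fun k => if hk : k < r then - w ⟨k, hk⟩ else if k = r then 1 else 0
  let f0 : ℕ → ℝ := fun k => if hk : k < r then - w ⟨k, hk⟩ else 0
  have hM : (MM r).mulVec w = fun i : Fin r => pascal i r := by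
    rw [Matrix.mulVec_mulVec, Matrix.mul_nonsing_inv _ (isUnit_iff_ne_zero.mpr (MM_det_ne_zero r)),
      Matrix.one_mulVec]
  refine ⟨f, by simp [f], fun k hk => ?_, fun i hi => ?_⟩
  · simp [f]; split_ifs <;> first | rfl | omega
  · have h1 := MM_mulVec r f0 ⟨i, hi⟩
    have h2 : (fun k : Fin r => f0 k) = - w := by funext k; simp [f0]
    rw [h2, Matrix.mulVec_neg, hM] at h1
    simp only [Pi.neg_apply] at h1
    have h3 : Mop (r + 1) f i = Mop r f0 i + pascal i r := by
      unfold Mop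
      rw [Finset.sum_range_succ, show f r = 1 by simp [f], ← add_assoc, mul_one]
      congr 2
      · simp [f, f0, hi]
      · refine Finset.sum_congr rfl fun k hk => ?_
        have : k < r := by simpa using hk
        simp [f, f0, this]
    rw [h3, ← h1]; ring

/-- The orthogonal sequence `f_r`: it has `f_r(r) = 1`, vanishes beyond `r`, and `(1 + B) f_r`
vanishes below `r`. -/
noncomputable def orth (r : ℕ) : ℕ → ℝ := (exists_orth r).choose

lemma orth_spec (r : ℕ) : IsOrth r (orth r) := (exists_orth r).choose_spec

lemma IsOrth.unique {r : ℕ} {f g : ℕ → ℝ} (hf : IsOrth r f) (hg : IsOrth r g) : f = g := by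
  have h : (fun k => 1 * f k + (-1) * g k) = 0 := by
    have hs : ∀ k, r ≤ k → (fun k => 1 * f k + (-1) * g k) k = 0 := by
      intro k hk
      rcases hk.eq_or_lt with rfl | hk
      · simp [hf.top, hg.top]
      · simp [hf.supp k hk, hg.supp k hk]
    refine Mop_inj (n := r) hs fun i hi => ?_
    rw [← Mop_mono hs (Nat.le_succ r), Mop_lin, hf.orth i hi, hg.orth i hi]; ring
  funext k
  have := congrFun h k
  simp at this
  linarith

/-- The squared norm of `f_r`. -/
noncomputable def hnorm (r : ℕ) : ℝ := Mop (r + 1) (orth r) r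

lemma hnorm_ne_zero (r : ℕ) : hnorm r ≠ 0 := by
  intro h
  have : orth r = 0 := by
    refine Mop_inj (n := r + 1) (orth_spec r).supp fun i hi => ?_
    rcases (Nat.lt_succ_iff.mp hi).eq_or_lt with rfl | hi
    · exact h
    · exact (orth_spec r).orth i hi
  have h1 := (orth_spec r).top
  rw [this] at h1
  simp at h1

/-- Summation by parts for `tri`. -/
lemma tri_by_parts (a d f G : ℕ → ℝ) (ha : a 0 = 0) (m : ℕ) :
    ∑ k ∈ range m, (G k * tri a d f k - tri a d G k * f k) =
      a m * (G (m - 1) * f m - G m * f (m - 1)) := by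
  induction m with
  | zero => simp [ha]
  | succ m ih =>
    rw [Finset.sum_range_succ, ih]
    unfold tri
    simp only [Nat.add_sub_cancel]
    ring

/-- Tridiagonal operators commuting with the Pascal matrix commute with `1 + B`. -/
lemma Mop_tri (a d : ℕ → ℝ) (ha : a 0 = 0)
    (hcomm : ∀ i j, tri a d (pascal i) j = tri a d (fun k => pascal k j) i)
    {n : ℕ} {f : ℕ → ℝ} (hf : ∀ k, n ≤ k → f k = 0) (i : ℕ) :
    Mop (n + 1) (tri a d f) i = tri a d (Mop (n + 1) f) i := by
  have h := tri_by_parts a d f (pascal i) ha (n + 1)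
  rw [hf (n + 1) (by omega), Nat.add_sub_cancel, hf n le_rfl, Finset.sum_sub_distrib] at h
  have h2 : ∑ k ∈ range (n + 1), tri a d (pascal i) k * f k =
      tri a d (fun l => ∑ k ∈ range (n + 1), pascal l k * f k) i := by
    simp_rw [hcomm]
    unfold tri
    simp only [Finset.mul_sum, add_mul, Finset.sum_add_distrib, mul_assoc]
  have h3 : tri a d (Mop (n + 1) f) i = tri a d f i +
      tri a d (fun l => ∑ k ∈ range (n + 1), pascal l k * f k) i := by
    unfold tri Mop; ring
  rw [h3, ← h2, Mop]
  linarith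

/-- A sequence of degree at most `n + 1` orthogonal to all degrees below `n` is a combination
of the two top orthogonal sequences. -/
lemma orth_expand {n : ℕ} {u : ℕ → ℝ} (hu : ∀ k, n + 2 ≤ k → u k = 0)
    (h : ∀ i < n, Mop (n + 2) u i = 0) (k : ℕ) :
    u k = u (n + 1) * orth (n + 1) k + Mop (n + 2) u n / hnorm n * orth n k := by
  have o1 := orth_spec (n + 1)
  have o0 := orth_spec n
  set c1 := u (n + 1)
  set c0 := Mop (n + 2) u n / hnorm n
  have hn := hnorm_ne_zero n
  let g : ℕ → ℝ := fun k => 1 * u k + (-1) * (c1 * orth (n + 1) k + c0 * orth n k)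
  have hs : ∀ k, n + 1 ≤ k → g k = 0 := by
    intro k hk
    rcases hk.eq_or_lt with rfl | hk
    · simp [g, c1, o1.top, o0.supp]
    · simp [g, hu k hk, o1.supp k hk, o0.supp k (by omega)]
  have hg : g = 0 := by
    refine Mop_inj (n := n + 1) hs fun i hi => ?_
    rw [← Mop_mono hs (Nat.le_succ (n + 1)), Mop_lin, Mop_lin,
      Mop_mono (n' := n + 2) o0.supp (by omega), o1.orth i hi]
    rcases (Nat.lt_succ_iff.mp hi).eq_or_lt with rfl | hi
    · change _ + _ * (_ + c0 * hnorm i) = 0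
      simp only [c0]
      field_simp
      ring
    · rw [o0.orth i hi, h i hi]; ring
  have := congrFun hg k
  simp [g] at this
  linarith

lemma alternating_choose_mul_choose (j l : ℕ) :
    ∑ k ∈ range (j + 1), (-1 : ℝ) ^ k * j.choose k * k.choose l = if j = l then (-1) ^ j else 0 := by
  have h := fwdDiff_iter_eq_sum_shift (1 : ℕ) (fun x => (x.choose l : ℤ)) j 0
  rw [fwdDiff_iter_choose_zero] at h
  have h' : (if j = l then (1 : ℝ) else 0) =
      ∑ k ∈ range (j + 1), (-1 : ℝ) ^ (j - k) * j.choose k * k.choose l := by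
    have h2 := congrArg (fun z : ℤ => (z : ℝ)) h
    simpa using h2
  have h3 : (if j = l then (-1 : ℝ) ^ j else 0) = (-1) ^ j * (if j = l then (1 : ℝ) else 0) := by
    split_ifs <;> simp
  rw [h3, h', Finset.mul_sum]
  refine Finset.sum_congr rfl fun k hk => ?_
  have hk' : k ≤ j := by simp at hk; omega
  obtain ⟨c, rfl⟩ := Nat.exists_eq_add_of_le hk'
  have hc : ((-1 : ℝ) ^ c) * (-1) ^ c = 1 := by rw [← mul_pow]; simp
  rw [Nat.add_sub_cancel_left, pow_add]
  linear_combination (-(-1 : ℝ) ^ k * (k + c).choose k * k.choose l) * hc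

/-- `B J = Jᵀ` for the signed binomial matrix `J_{kj} = (-1)^k binom(j,k)`. -/
lemma pascal_mul_J (i j n : ℕ) (hj : j < n) :
    ∑ k ∈ range n, pascal i k * ((-1) ^ k * j.choose k) = (-1) ^ j * i.choose j := by
  have h0 : ∑ k ∈ range n, pascal i k * ((-1) ^ k * j.choose k) =
      ∑ k ∈ range (j + 1), pascal i k * ((-1) ^ k * j.choose k) := by
    symm
    refine Finset.sum_subset (by intro x; simp; omega) fun k _ hk => ?_
    rw [Nat.choose_eq_zero_of_lt (by simpa using hk)]; simp
  rw [h0]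
  simp_rw [fun k => pascal_gram i k (i + j + 1) (by omega), Finset.sum_mul]
  rw [Finset.sum_comm]
  have h1 : ∀ l, ∑ k ∈ range (j + 1), (i.choose l : ℝ) * (k.choose l) * ((-1) ^ k * j.choose k)
      = i.choose l * (if j = l then (-1) ^ j else 0) := by
    intro l
    rw [← alternating_choose_mul_choose, Finset.mul_sum]
    exact Finset.sum_congr rfl fun k _ => by ring
  simp_rw [h1]
  simp only [mul_ite, mul_zero, Finset.sum_ite_eq, mem_range]
  rw [if_pos (by omega)]; ring

/-- `(-1) ^ r J f_r` satisfies the conditions defining `f_r`, so that `f_r` is an eigenvector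
of `J`. -/
lemma orth_parity (r : ℕ) :
    IsOrth r (fun k => (-1) ^ r * ((-1) ^ k * ∑ i ∈ range (r + 1), (i.choose k : ℝ) * orth r i)) := by
  have o := orth_spec r
  refine ⟨?_, fun k hk => ?_, fun i hi => ?_⟩
  · rw [Finset.sum_range_succ, Finset.sum_eq_zero, o.top]
    · simp [← mul_pow]
    · intro k hk
      rw [Nat.choose_eq_zero_of_lt (by simpa using hk)]; simp
  · rw [Finset.sum_eq_zero]
    · simp
    · intro i hi
      have : i < r + 1 := by simpa using hi
      rw [Nat.choose_eq_zero_of_lt (by omega)]; simp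
  · -- `M J f = Jᵀ M f`, and the right-hand side only involves entries of `M f` up to `i < r`.
    have key : ∑ k ∈ range (r + 1), (-1 : ℝ) ^ k * i.choose k * Mop (r + 1) (orth r) k = 0 := by
      refine Finset.sum_eq_zero fun k hk => ?_
      by_cases hki : k ≤ i
      · rw [o.orth k (by omega), mul_zero]
      · rw [Nat.choose_eq_zero_of_lt (by omega)]; simp
    have e1 : ∑ k ∈ range (r + 1), pascal i k * ((-1) ^ k * ∑ j ∈ range (r + 1),
        (j.choose k : ℝ) * orth r j) = ∑ j ∈ range (r + 1), (-1 : ℝ) ^ j * i.choose j * orth r j := by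
      simp_rw [Finset.mul_sum]
      rw [Finset.sum_comm]
      refine Finset.sum_congr rfl fun j hj => ?_
      rw [← pascal_mul_J i j (r + 1) (by simpa using hj), Finset.sum_mul]
      exact Finset.sum_congr rfl fun k _ => by ring
    have e2 : ∑ k ∈ range (r + 1), (-1 : ℝ) ^ k * i.choose k * Mop (r + 1) (orth r) k =
        ∑ k ∈ range (r + 1), (-1 : ℝ) ^ k * i.choose k * orth r k +
        (-1) ^ i * ∑ j ∈ range (r + 1), (j.choose i : ℝ) * orth r j := by
      unfold Mop
      simp_rw [mul_add, Finset.sum_add_distrib]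
      congr 1
      simp_rw [Finset.mul_sum]
      rw [Finset.sum_comm]
      refine Finset.sum_congr rfl fun j _ => ?_
      rw [← mul_assoc ((-1 : ℝ) ^ i), ← pascal_mul_J j i (r + 1) (by omega), Finset.sum_mul]
      exact Finset.sum_congr rfl fun k _ => by rw [pascal_symm k j]; ring
    have e3 : Mop (r + 1) (fun k => (-1) ^ r * ((-1) ^ k * ∑ i ∈ range (r + 1),
        (i.choose k : ℝ) * orth r i)) i = (-1) ^ r * ((-1) ^ i * ∑ j ∈ range (r + 1),
        (j.choose i : ℝ) * orth r j + ∑ k ∈ range (r + 1), pascal i k * ((-1) ^ k *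
        ∑ j ∈ range (r + 1), (j.choose k : ℝ) * orth r j)) := by
      rw [Mop, mul_add]
      congr 1
      rw [Finset.mul_sum]
      exact Finset.sum_congr rfl fun k _ => by ring
    rw [e3, e1, add_comm, ← e2, key, mul_zero]

/-- The subleading coefficient of `f_{n+1}`. -/
lemma orth_pred (n : ℕ) : orth (n + 1) n = -((n : ℝ) + 1) / 2 := by
  have o := orth_spec (n + 1)
  have h := congrFun (o.unique (orth_parity (n + 1))) n
  rw [Finset.sum_range_succ, Finset.sum_range_succ, Finset.sum_eq_zero, o.top] at h
  · have h2 : ((-1 : ℝ) ^ n) * (-1) ^ n = 1 := by rw [← mul_pow]; simp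
    simp only [Nat.choose_self, Nat.choose_succ_self_right, pow_succ] at h
    push_cast at h
    linear_combination (1 / 2) * h - (1 / 2) * (orth (n + 1) n + n + 1) * h2
  · intro k hk
    rw [Nat.choose_eq_zero_of_lt (by simpa using hk)]; simp

/-- Ratio of consecutive norms. -/
noncomputable def ratio (n : ℕ) : ℝ := hnorm (n + 1) / hnorm n

lemma tri_supp {a d f : ℕ → ℝ} {n : ℕ} (hf : ∀ k, n ≤ k → f k = 0) :
    ∀ k, n + 1 ≤ k → tri a d f k = 0 := by
  intro k hk
  unfold tri
  rw [hf (k - 1) (by omega), hf k (by omega), hf (k + 1) (by omega)]; ring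

/-- Three-term relation coming from the operator with weights `k`. -/
lemma orth_Z (n k : ℕ) :
    tri (fun k => k) (fun k => -k) (orth (n + 1)) k - (n + 2) * orth (n + 2) k =
      1 / 2 * orth (n + 1) k + (n + 1) * ratio n * orth n k := by
  have o := orth_spec (n + 1)
  have o2 := orth_spec (n + 2)
  set Z := tri (fun k => (k : ℝ)) (fun k => -(k : ℝ)) with hZ
  have hMZ : ∀ i, Mop (n + 3) (Z (orth (n + 1))) i = Z (Mop (n + 3) (orth (n + 1))) i :=
    Mop_tri _ _ (by simp) tri_Z_comm o.supp
  have hm : Mop (n + 3) (orth (n + 1)) = Mop (n + 2) (orth (n + 1)) :=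
    funext fun i => Mop_mono o.supp (by omega) i
  rw [hm] at hMZ
  let u : ℕ → ℝ := fun k => 1 * Z (orth (n + 1)) k + (-(n + 2 : ℝ)) * orth (n + 2) k
  have hs : ∀ k, n + 2 ≤ k → u k = 0 := by
    intro k hk
    rcases hk.eq_or_lt with rfl | hk
    · simp only [u, hZ, tri, o2.top]
      rw [show n + 2 - 1 = n + 1 by omega, o.top, o.supp _ le_rfl, o.supp (n + 2 + 1) (by omega)]
      push_cast; ring
    · simp only [u]
      rw [o2.supp k hk, hZ, tri_supp o.supp k hk]; ring
  have hMu : ∀ i < n + 1, Mop (n + 2) u i = Z (Mop (n + 2) (orth (n + 1))) i := by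
    intro i hi
    rw [← Mop_mono hs (Nat.le_succ (n + 2)), Mop_lin, o2.orth i (by omega), hMZ]; ring
  have hex := orth_expand hs (fun i hi => by
    rw [hMu i (by omega), hZ, tri, o.orth i (by omega), o.orth (i - 1) (by omega),
      o.orth (i + 1) (by omega)]; ring) k
  have h1 : u (n + 1) = 1 / 2 := by
    simp only [u, hZ, tri]
    rw [o.supp (n + 1 + 1) (by omega), o.top, Nat.add_sub_cancel, orth_pred n, orth_pred (n + 1)]
    push_cast; ring
  have hh : Mop (n + 2) (orth (n + 1)) (n + 1) = hnorm (n + 1) := rfl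
  have h2 : Mop (n + 2) u n / hnorm n = (n + 1) * ratio n := by
    rw [hMu n (by omega), hZ, tri, o.orth n (by omega), o.orth (n - 1) (by omega), hh, ratio]
    push_cast; ring
  rw [h1, h2] at hex
  rw [← hex]; simp only [u]; ring

/-- Three-term relation coming from the operator with weights `k ^ 3`. -/
lemma orth_T (n k : ℕ) :
    tri (fun k => k ^ 3) (fun k => -(2 * k ^ 3 + 3 * k ^ 2 + 2 * k)) (orth (n + 1)) k
      - (n + 2) ^ 2 * tri (fun k => k) (fun k => -k) (orth (n + 1)) k =
      (-((n : ℝ) + 1) ^ 2 / 2 - (n + 1)) * orth (n + 1) k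
        - (n + 1) * (2 * n + 3) * ratio n * orth n k := by
  have o := orth_spec (n + 1)
  set Z := tri (fun k => (k : ℝ)) (fun k => -(k : ℝ)) with hZ
  set W := tri (fun k => (k : ℝ) ^ 3) (fun k => -(2 * (k : ℝ) ^ 3 + 3 * k ^ 2 + 2 * k)) with hW
  have hMZ : ∀ i, Mop (n + 3) (Z (orth (n + 1))) i = Z (Mop (n + 3) (orth (n + 1))) i :=
    Mop_tri _ _ (by simp) tri_Z_comm o.supp
  have hMW : ∀ i, Mop (n + 3) (W (orth (n + 1))) i = W (Mop (n + 3) (orth (n + 1))) i :=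
    Mop_tri _ _ (by simp) tri_T_comm o.supp
  have hm : Mop (n + 3) (orth (n + 1)) = Mop (n + 2) (orth (n + 1)) :=
    funext fun i => Mop_mono o.supp (by omega) i
  rw [hm] at hMZ hMW
  let u : ℕ → ℝ := fun k => 1 * W (orth (n + 1)) k + (-(n + 2 : ℝ) ^ 2) * Z (orth (n + 1)) k
  have hs : ∀ k, n + 2 ≤ k → u k = 0 := by
    intro k hk
    rcases hk.eq_or_lt with rfl | hk
    · simp only [u, hZ, hW, tri]
      rw [show n + 2 - 1 = n + 1 by omega, o.top, o.supp _ le_rfl, o.supp (n + 2 + 1) (by omega)]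
      push_cast; ring
    · simp only [u]
      rw [hZ, hW, tri_supp o.supp k hk, tri_supp o.supp k hk]; ring
  have hMu : ∀ i, Mop (n + 2) u i = W (Mop (n + 2) (orth (n + 1))) i
      - (n + 2) ^ 2 * Z (Mop (n + 2) (orth (n + 1))) i := by
    intro i
    rw [← Mop_mono hs (Nat.le_succ (n + 2)), Mop_lin, hMZ, hMW]; ring
  have hex := orth_expand hs (fun i hi => by
    rw [hMu i, hZ, hW, tri, tri, o.orth i (by omega), o.orth (i - 1) (by omega),
      o.orth (i + 1) (by omega)]; ring) k
  have h1 : u (n + 1) = -((n : ℝ) + 1) ^ 2 / 2 - (n + 1) := by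
    simp only [u, hZ, hW, tri]
    rw [o.supp (n + 1 + 1) (by omega), o.top, Nat.add_sub_cancel, orth_pred n]
    push_cast; ring
  have hh : Mop (n + 2) (orth (n + 1)) (n + 1) = hnorm (n + 1) := rfl
  have h2 : Mop (n + 2) u n / hnorm n = - ((n + 1) * (2 * n + 3) * ratio n) := by
    rw [hMu n, hZ, hW, tri, tri, o.orth n (by omega), o.orth (n - 1) (by omega), hh, ratio]
    push_cast; ring
  rw [h1, h2] at hex
  linear_combination hex

/-- The coefficient of degree `n - 1` in `f_{n+1}`, in terms of the norm ratio. -/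
lemma orth_coeff (n : ℕ) :
    -4 * n * orth (n + 1) (n - 1) = (n + 1 : ℝ) ^ 2 / 4 + (n + 1) / 2 - (2 * n + 3) * ratio n
      + (2 * n + 3) - n * (n + 1) * (n - 2) / 2 := by
  have h := orth_T n n
  have o := orth_spec (n + 1)
  rw [tri, tri, o.top, (orth_spec n).top, orth_pred] at h
  have hn : (n : ℝ) + 1 ≠ 0 := by positivity
  apply mul_left_cancel₀ hn
  push_cast at h
  linear_combination h

lemma orth_step (n : ℕ) :
    n * orth (n + 1) (n - 1) + (n : ℝ) * (n + 1) / 2 + (n + 1) - (n + 2) * orth (n + 2) n =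
      - (n + 1) / 4 + (n + 1) * ratio n := by
  have h := orth_Z n n
  rw [tri, (orth_spec (n + 1)).top, (orth_spec n).top, orth_pred] at h
  push_cast at h
  linear_combination h

/-- The ratio of the norms, by eliminating the coefficients of degree `n - 1` from `orth_step` and
`orth_coeff`. -/
lemma ratio_eq (n : ℕ) :
    ratio n = 3 * (9 * ((n : ℝ) + 1) ^ 2 - 4) / (4 * (4 * ((n : ℝ) + 1) ^ 2 - 1)) := by
  induction n with
  | zero =>
    have h := orth_coeff 0
    norm_num at h ⊢
    linarith
  | succ n ih =>
    have h1 := orth_step n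
    have h2 := orth_coeff n
    have h3 := orth_coeff (n + 1)
    rw [Nat.add_sub_cancel] at h3
    rw [ih] at h1 h2
    push_cast at h3 ⊢
    have d1 : 4 * ((n : ℝ) + 1) ^ 2 - 1 = (2 * n + 1) * (2 * n + 3) := by ring
    have d2 : 4 * ((n : ℝ) + 1 + 1) ^ 2 - 1 = (2 * n + 3) * (2 * n + 5) := by ring
    have d3 : (n : ℝ) + 2 ≠ 0 := by positivity
    have d4 : 2 * (n : ℝ) + 5 ≠ 0 := by positivity
    set S : ℝ := 3 * (9 * ((n : ℝ) + 1) ^ 2 - 4) / (4 * (4 * ((n : ℝ) + 1) ^ 2 - 1)) with hS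
    have h4 : (n + 2) * (2 * n + 5) * ratio (n + 1) = (n + 2) * ((n + 1 + 1 : ℝ) ^ 2 / 4
        + (n + 1 + 1) / 2 + (2 * (n + 1) + 3) - (n + 1) * (n + 1 + 1) * (n + 1 - 2) / 2)
        + 4 * (n + 1) * (-((n + 1 : ℝ) ^ 2 / 4 + (n + 1) / 2 - (2 * n + 3) * S
          + (2 * n + 3) - n * (n + 1) * (n - 2) / 2) / 4 + (n : ℝ) * (n + 1) / 2 + (n + 1)
          + (n + 1) / 4 - (n + 1) * S) := by
      linear_combination (n + 2) * h3 - 4 * (n + 1) * h1 - (n + 1) * h2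
    apply mul_left_cancel₀ (mul_ne_zero d3 d4)
    rw [h4, hS, d1, d2]
    field_simp
    ring

/-! ### Derivatives of the logarithm of the determinant -/

section
open Matrix

/-- If the first two derivatives of a matrix path are commutators up to rank-two corrections,
the first two derivatives of `log det` only involve those corrections. -/
lemma logdet_derivs {ι : Type*} [Fintype ι] [DecidableEq ι] (N M Y V A A2 : Matrix ι ι ℝ)
    (b e b' w v : ι → ℝ) (y y1 : ℝ) (hNM : N * M = 1) (hMN : M * N = 1) (hNs : Nᵀ = N)
    (hAs : Aᵀ = A)
    (hA : A = M * Y - Y * M + y • (vecMulVec b e + vecMulVec e b))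
    (hA2 : A2 = A * Y - Y * A + (M * V - V * M) + y1 • (vecMulVec b e + vecMulVec e b)
      + y • (vecMulVec b' e + vecMulVec e b'))
    (hw : w = N *ᵥ b) (hv : v = N *ᵥ e) :
    trace (N * A) = 2 * y * (e ⬝ᵥ w) ∧
    trace (N * A2) - trace (N * A * (N * A)) =
      2 * y1 * (e ⬝ᵥ w) + 2 * y * (v ⬝ᵥ b' - (e ⬝ᵥ Y *ᵥ w - v ⬝ᵥ Y *ᵥ b
        + y * ((v ⬝ᵥ b) * (e ⬝ᵥ w) + (v ⬝ᵥ e) * (b ⬝ᵥ w)))) := by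
  have hvec : ∀ x z : ι → ℝ, x ⬝ᵥ N *ᵥ z = (N *ᵥ x) ⬝ᵥ z := by
    intro x z
    rw [dotProduct_mulVec, ← mulVec_transpose, hNs]
  have hvecA : ∀ x z : ι → ℝ, x ⬝ᵥ A *ᵥ z = (A *ᵥ x) ⬝ᵥ z := by
    intro x z
    rw [dotProduct_mulVec, ← mulVec_transpose, hAs]
  have hMw : M *ᵥ w = b := by rw [hw, mulVec_mulVec, hMN, one_mulVec]
  have hMs : Mᵀ = M := by
    have h1 : Mᵀ * N = 1 := by
      rw [← hNs, ← transpose_mul, hNM, transpose_one]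
    calc Mᵀ = Mᵀ * (N * M) := by rw [hNM, mul_one]
      _ = M := by rw [← mul_assoc, h1, one_mul]
  have hMv : M *ᵥ v = e := by rw [hv, mulVec_mulVec, hMN, one_mulVec]
  have hvb : v ⬝ᵥ b = e ⬝ᵥ w := by rw [hv, hw, hvec]
  have hK : N * A = Y - N * Y * M + y • (vecMulVec w e + vecMulVec v b) := by
    rw [hA, mul_add, mul_sub, ← mul_assoc N M Y, hNM, one_mul, mul_smul_comm, mul_add,
      mul_vecMulVec, mul_vecMulVec, ← hw, ← hv, ← mul_assoc]
  have hcyc : trace (N * Y * M) = trace Y := by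
    rw [trace_mul_comm, ← mul_assoc, hMN, one_mul]
  have hcycV : trace (N * (V * M)) = trace V := by
    rw [← mul_assoc, trace_mul_comm, ← mul_assoc, hMN, one_mul]
  have hquad : v ⬝ᵥ A *ᵥ w = e ⬝ᵥ Y *ᵥ w - v ⬝ᵥ Y *ᵥ b
        + y * ((v ⬝ᵥ b) * (e ⬝ᵥ w) + (v ⬝ᵥ e) * (b ⬝ᵥ w)) := by
    rw [hA, add_mulVec, sub_mulVec, dotProduct_add, dotProduct_sub, ← mulVec_mulVec,
      ← mulVec_mulVec, hMw]
    congr 1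
    · congr 1
      rw [dotProduct_mulVec, ← mulVec_transpose, hMs, hMv]
    · rw [smul_mulVec, add_mulVec, dotProduct_smul, dotProduct_add, vecMulVec_mulVec,
        vecMulVec_mulVec]
      simp [dotProduct_smul, mul_comm]
  constructor
  · rw [hK, trace_add, trace_sub, hcyc, trace_smul, trace_add, trace_vecMulVec, trace_vecMulVec,
      dotProduct_comm w e, hvb, smul_eq_mul]
    ring
  · have h1 : trace (N * A2) = trace (N * A * Y) - trace (N * Y * A)
        + 2 * y1 * (e ⬝ᵥ w) + 2 * y * (v ⬝ᵥ b') := by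
      rw [hA2]
      simp only [mul_add, mul_sub, trace_add, trace_sub, mul_smul_comm, trace_smul, smul_eq_mul,
        mul_vecMulVec, trace_vecMulVec, hcycV, ← hw, ← hv]
      rw [← mul_assoc N M V, hNM, one_mul, ← mul_assoc, ← mul_assoc, dotProduct_comm w e, hvb,
        dotProduct_comm (N *ᵥ b') e, hvec, ← hv]
      ring
    have h2 : trace (N * A * (N * A)) = trace (N * A * Y) - trace (N * Y * A)
        + y * (2 * (v ⬝ᵥ A *ᵥ w)) := by
      have e1 : N * A * (N * A) = Y * (N * A) - N * Y * M * (N * A)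
          + y • (vecMulVec w e * (N * A) + vecMulVec v b * (N * A)) := by
        have := congrArg (· * (N * A)) hK
        simpa only [add_mul, sub_mul, smul_mul_assoc] using this
      have e2 : N * Y * M * (N * A) = N * Y * A := by
        rw [← mul_assoc, mul_assoc (N * Y) M N, hMN, mul_one]
      rw [e1, e2, trace_add, trace_sub, trace_smul, trace_add, trace_mul_comm Y,
        trace_mul_comm (vecMulVec w e), trace_mul_comm (vecMulVec v b), mul_vecMulVec,
        mul_vecMulVec, trace_vecMulVec, trace_vecMulVec, ← mulVec_mulVec, ← mulVec_mulVec,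
        dotProduct_comm _ e, dotProduct_comm _ b, hvec, hvec, ← hv, ← hw, hvecA w v,
        dotProduct_comm _ v, smul_eq_mul]
      ring
    rw [h1, h2, ← hquad]
    ring

/-- The antisymmetric bidiagonal matrix with entries `y k` in position `(k, k - 1)`. -/
def skewMat (n : ℕ) (y : ℕ → ℝ) : Matrix (Fin n) (Fin n) ℝ :=
  Matrix.of fun i j => if (i : ℕ) = j + 1 then y i else if (j : ℕ) = i + 1 then - y j else 0

lemma skewMat_mulVec (n : ℕ) (y f : ℕ → ℝ) (hy : y 0 = 0) (i : Fin (n + 1)) :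
    (skewMat (n + 1) y *ᵥ fun k => f k) i =
      skew y f i + if (i : ℕ) = n then y (n + 1) * f (n + 1) else 0 := by
  have h : (skewMat (n + 1) y *ᵥ fun k => f k) i =
      ∑ k ∈ range (n + 1), ((if (i : ℕ) = k + 1 then y i * f k else 0) -
        (if k = i + 1 then y k * f k else 0)) := by
    rw [mulVec, dotProduct, Finset.sum_range]
    refine Finset.sum_congr rfl fun k _ => ?_
    simp only [skewMat, of_apply]
    split_ifs <;> first | omega | ring
  rw [h, Finset.sum_sub_distrib, Finset.sum_ite_eq']
  have hi := i.2
  have h1 : ∑ k ∈ range (n + 1), (if (i : ℕ) = k + 1 then y i * f k else 0) = y i * f (i - 1) := by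
    rcases Nat.eq_zero_or_pos (i : ℕ) with h0 | h0
    · rw [h0, hy, zero_mul]
      exact Finset.sum_eq_zero fun k _ => by rw [if_neg (by omega)]
    · have : ∀ k, ((i : ℕ) = k + 1) ↔ k = i - 1 := fun k => by omega
      simp_rw [this]
      rw [Finset.sum_ite_eq', if_pos (by rw [Finset.mem_range]; omega)]
  rw [h1, skew]
  by_cases hin : (i : ℕ) = n
  · rw [if_neg (by simp; omega), if_pos hin, hin]; ring
  · rw [if_pos (by simp; omega), if_neg hin]; ring

lemma skewMat_transpose (n : ℕ) (y : ℕ → ℝ) : (skewMat n y)ᵀ = - skewMat n y := by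
  ext i j
  rw [Matrix.neg_apply]
  simp only [skewMat, transpose_apply, of_apply]
  split_ifs <;> first | omega | simp

/-- Truncating the commutator of an infinite matrix with an antisymmetric bidiagonal one leaves
a rank-two boundary term. -/
lemma commutator_trunc (n : ℕ) (y : ℕ → ℝ) (hy : y 0 = 0) (C : ℕ → ℕ → ℝ)
    (hC : ∀ i j, C i j = C j i) :
    (Matrix.of fun i j : Fin (n + 1) => - skew y (C i) j - skew y (fun k => C k j) i) =
      (Matrix.of fun i j : Fin (n + 1) => C i j) * skewMat (n + 1) y
      - skewMat (n + 1) y * (Matrix.of fun i j : Fin (n + 1) => C i j)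
      + y (n + 1) • (vecMulVec (fun i : Fin (n + 1) => C i (n + 1)) (Pi.single (Fin.last n) 1)
        + vecMulVec (Pi.single (Fin.last n) 1) (fun i : Fin (n + 1) => C i (n + 1))) := by
  have hL : ∀ i j : Fin (n + 1), (skewMat (n + 1) y * (Matrix.of fun i j : Fin (n + 1) => C i j)) i j
      = skew y (fun k => C k j) i + if (i : ℕ) = n then y (n + 1) * C (n + 1) j else 0 := by
    intro i j
    exact skewMat_mulVec n y (fun k => C k j) hy i
  have hR : ∀ i j : Fin (n + 1), ((Matrix.of fun i j : Fin (n + 1) => C i j) * skewMat (n + 1) y) i j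
      = - skew y (C i) j - if (j : ℕ) = n then y (n + 1) * C i (n + 1) else 0 := by
    intro i j
    have h1 : (Matrix.of fun i j : Fin (n + 1) => C i j)ᵀ = Matrix.of fun i j : Fin (n + 1) => C i j := by
      ext a b; exact hC b a
    have h2 : (Matrix.of fun i j : Fin (n + 1) => C i j) * skewMat (n + 1) y =
        - (skewMat (n + 1) y * (Matrix.of fun i j : Fin (n + 1) => C i j))ᵀ := by
      rw [transpose_mul, skewMat_transpose, h1]; simp
    rw [h2, Matrix.neg_apply, transpose_apply, hL, hC (n + 1) i]
    have : (fun k => C k i) = C i := funext fun k => hC k i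
    rw [this]; ring
  ext i j
  have hs : ∀ i : Fin (n + 1), (Pi.single (Fin.last n) (1 : ℝ) : Fin (n + 1) → ℝ) i
      = if (i : ℕ) = n then 1 else 0 := by
    intro i
    rw [Pi.single_apply]
    congr 1
    rw [Fin.ext_iff]; simp
  rw [Matrix.add_apply, Matrix.sub_apply, hL, hR, Matrix.smul_apply, Matrix.add_apply, vecMulVec_apply, vecMulVec_apply, hs, hs,
    of_apply, hC (n + 1) j, smul_eq_mul]
  split_ifs <;> ring

lemma pascal'_symm (i j : ℕ) : pascal' i j = pascal' j i := by
  rw [pascal', pascal', pascal_symm]; ring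

/-- The first two derivatives of `log det (1 + A_q)` at `q = 1`, where `A_q` is the `q`-deformed
Pascal matrix of size `r = n + 1`. -/
lemma jets_value (n : ℕ) :
    trace ((MM (n + 1))⁻¹ * Matrix.of fun i j : Fin (n + 1) => pascal' i j)
      = ((n : ℝ) + 1) ^ 3 / 2 ∧
    trace ((MM (n + 1))⁻¹ * Matrix.of fun i j : Fin (n + 1) => pascalSnd i j)
      - trace ((MM (n + 1))⁻¹ * (Matrix.of fun i j : Fin (n + 1) => pascal' i j) *
        ((MM (n + 1))⁻¹ * Matrix.of fun i j : Fin (n + 1) => pascal' i j))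
      = 3 / 4 * ((n : ℝ) + 1) ^ 4 - 1 / 2 * ((n : ℝ) + 1) ^ 2 := by
  have hunit : IsUnit (MM (n + 1)).det := isUnit_iff_ne_zero.mpr (MM_det_ne_zero _)
  have hNM := Matrix.nonsing_inv_mul _ hunit
  have hMN := Matrix.mul_nonsing_inv _ hunit
  have hMs : (MM (n + 1))ᵀ = MM (n + 1) := by
    rw [MM, transpose_add, transpose_one]
    congr 1
    ext i j; exact pascal_symm j i
  have hNs : ((MM (n + 1))⁻¹)ᵀ = (MM (n + 1))⁻¹ := by
    rw [transpose_nonsing_inv, hMs]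
  have hAs : (Matrix.of fun i j : Fin (n + 1) => pascal' i j)ᵀ =
      Matrix.of fun i j : Fin (n + 1) => pascal' i j := by
    ext i j; exact pascal'_symm j i
  set N := (MM (n + 1))⁻¹ with hN
  set A := Matrix.of fun i j : Fin (n + 1) => pascal' i j with hAdef
  set A2 := Matrix.of fun i j : Fin (n + 1) => pascalSnd i j with hA2def
  set y : ℕ → ℝ := fun k => k ^ 2 / 2 with hy
  set z : ℕ → ℝ := fun k => -(3 / 4 * k ^ 3) with hz
  have hcomm : ∀ W : Matrix (Fin (n + 1)) (Fin (n + 1)) ℝ, MM (n + 1) * W - W * MM (n + 1) =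
      (Matrix.of fun i j : Fin (n + 1) => pascal i j) * W
        - W * Matrix.of fun i j : Fin (n + 1) => pascal i j := by
    intro W
    rw [MM, add_mul, mul_add, one_mul, mul_one]; abel
  set e : Fin (n + 1) → ℝ := Pi.single (Fin.last n) 1 with he
  set b : Fin (n + 1) → ℝ := fun i => pascal i (n + 1) with hb
  set b' : Fin (n + 1) → ℝ := fun i => pascal' i (n + 1) with hb'
  have hA : A = MM (n + 1) * skewMat (n + 1) y - skewMat (n + 1) y * MM (n + 1)
      + y (n + 1) • (vecMulVec b e + vecMulVec e b) := by
    rw [hcomm, ← commutator_trunc n y (by simp [hy]) pascal pascal_symm, hAdef]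
    ext i j
    exact pascal'_eq i j
  have hA2 : A2 = A * skewMat (n + 1) y - skewMat (n + 1) y * A
      + (MM (n + 1) * skewMat (n + 1) z - skewMat (n + 1) z * MM (n + 1))
      + z (n + 1) • (vecMulVec b e + vecMulVec e b)
      + y (n + 1) • (vecMulVec b' e + vecMulVec e b') := by
    have e1 := commutator_trunc n y (by simp [hy]) pascal' pascal'_symm
    have e2 := commutator_trunc n z (by simp [hz]) pascal pascal_symm
    rw [← hcomm] at e2
    have e3 : A2 = (Matrix.of fun i j : Fin (n + 1) => - skew y (pascal' i) j
        - skew y (fun k => pascal' k j) i) + (Matrix.of fun i j : Fin (n + 1) =>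
        - skew z (pascal i) j - skew z (fun k => pascal k j) i) := by
      ext i j
      rw [Matrix.add_apply, of_apply, of_apply, hA2def, of_apply, pascalSnd_eq]
      ring
    rw [e3, e1, e2]
    abel
  -- the two solutions `w = M⁻¹ b` and `v = M⁻¹ e` are given by orthogonal sequences
  have o := orth_spec n
  have o1 := orth_spec (n + 1)
  have o2 := orth_spec (n + 2)
  have hn0 := hnorm_ne_zero n
  set w : Fin (n + 1) → ℝ := fun i => - orth (n + 1) i with hwdef
  set v : Fin (n + 1) → ℝ := fun i => orth n i / hnorm n with hvdef
  have hw : w = N *ᵥ b := by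
    have : MM (n + 1) *ᵥ w = b := by
      funext i
      have h1 := MM_mulVec (n + 1) (fun k => - orth (n + 1) k) i
      have h2 := o1.orth i i.2
      rw [Mop, Finset.sum_range_succ, o1.top] at h2
      rw [hwdef, h1, Mop, hb]
      simp only [mul_neg, Finset.sum_neg_distrib]
      linarith
    rw [← this, mulVec_mulVec, hNM, one_mulVec]
  have hMv : MM (n + 1) *ᵥ v = e := by
    funext i
    have h1 := MM_mulVec (n + 1) (fun k => orth n k / hnorm n) i
    rw [hvdef, h1]
    have h2 : Mop (n + 1) (fun k => orth n k / hnorm n) i = Mop (n + 1) (orth n) i / hnorm n := by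
      rw [Mop, Mop, add_div, Finset.sum_div]
      simp only [mul_div_assoc]
    rw [h2, he, Pi.single_apply]
    by_cases hi : i = Fin.last n
    · rw [if_pos hi, hi, Fin.val_last]
      exact div_self hn0
    · rw [if_neg hi, o.orth i (by
        have : (i : ℕ) ≠ n := fun h => hi (Fin.ext h)
        have := i.2
        omega), zero_div]
  have hv : v = N *ᵥ e := by
    rw [← hMv, mulVec_mulVec, hNM, one_mulVec]
  obtain ⟨h1, h2⟩ := logdet_derivs N (MM (n + 1)) (skewMat (n + 1) y) (skewMat (n + 1) z) A A2
    b e b' w v (y (n + 1)) (z (n + 1)) hNM hMN hNs hAs hA hA2 hw hv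
  have hlast : ∀ u : Fin (n + 1) → ℝ, e ⬝ᵥ u = u (Fin.last n) := by
    intro u; rw [he, single_dotProduct, one_mul]
  have hvM : ∀ u : Fin (n + 1) → ℝ, v ⬝ᵥ MM (n + 1) *ᵥ u = u (Fin.last n) := by
    intro u
    rw [dotProduct_mulVec, ← mulVec_transpose, hMs, hMv, hlast]
  have hMw : MM (n + 1) *ᵥ w = b := by rw [hw, mulVec_mulVec, hMN, one_mulVec]
  have hp : e ⬝ᵥ w = ((n : ℝ) + 1) / 2 := by
    rw [hlast, hwdef]
    simp only [Fin.val_last]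
    rw [orth_pred]; ring
  have hvb : v ⬝ᵥ b = ((n : ℝ) + 1) / 2 := by
    rw [← hMw, hvM, ← hlast w, hp]
  have hve : v ⬝ᵥ e = 1 / hnorm n := by
    rw [dotProduct_comm, hlast, hvdef]
    simp only [Fin.val_last]
    rw [o.top]
  have hbw : b ⬝ᵥ w = 1 + pascal (n + 1) (n + 1) - hnorm (n + 1) := by
    have h3 : hnorm (n + 1) = 1 + ∑ k ∈ range (n + 1 + 1), pascal (n + 1) k * orth (n + 1) k := by
      rw [hnorm, Mop, o1.top]
    rw [Finset.sum_range_succ, o1.top, Finset.sum_range] at h3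
    have h4 : b ⬝ᵥ w = - ∑ k : Fin (n + 1), pascal (n + 1) k * orth (n + 1) k := by
      rw [dotProduct, ← Finset.sum_neg_distrib]
      refine Finset.sum_congr rfl fun k _ => ?_
      rw [hb, hwdef, pascal_symm (n + 1) k]; ring
    rw [h4, h3]; ring
  have heY : e ⬝ᵥ skewMat (n + 1) y *ᵥ w = - (y n * orth (n + 1) (n - 1)) := by
    have h3 := skewMat_mulVec n y (fun k => - orth (n + 1) k) (by simp [hy]) (Fin.last n)
    rw [hlast, hwdef, h3, skew, Fin.val_last, if_pos rfl]
    ring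
  have hβ : v ⬝ᵥ (fun i : Fin (n + 1) => pascal i (n + 2)) =
      ((n : ℝ) + 2) / 2 * ((n + 1) / 2) - orth (n + 2) n := by
    have h3 : (fun i : Fin (n + 1) => pascal i (n + 2)) =
        - (MM (n + 1) *ᵥ (fun i : Fin (n + 1) => orth (n + 2) i)) + (((n : ℝ) + 2) / 2) • b := by
      funext i
      have h4 := o2.orth i (by omega)
      rw [Mop, Finset.sum_range_succ, Finset.sum_range_succ, o2.top, orth_pred] at h4
      rw [Pi.add_apply, Pi.neg_apply, MM_mulVec, Pi.smul_apply, Mop, hb, smul_eq_mul]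
      push_cast at h4
      linarith
    rw [h3, dotProduct_add, dotProduct_neg, hvM, dotProduct_smul, hvb, smul_eq_mul, Fin.val_last]
    ring
  have hvB : v ⬝ᵥ (fun i : Fin (n + 1) => pascal i n) = 1 - 1 / hnorm n := by
    have h3 : (fun i : Fin (n + 1) => pascal i n) = MM (n + 1) *ᵥ e - e := by
      rw [MM, add_mulVec, one_mulVec, add_sub_cancel_left]
      funext i
      rw [he, mulVec_single_one]
      rfl
    rw [h3, dotProduct_sub, hvM, hve, he, Pi.single_eq_same]
  have hvv : v ⬝ᵥ b' + v ⬝ᵥ skewMat (n + 1) y *ᵥ b = y (n + 2) * (((n : ℝ) + 2) / 2 * ((n + 1) / 2)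
      - orth (n + 2) n) - y (n + 1) * (1 - 1 / hnorm n)
      + y (n + 1) * pascal (n + 1) (n + 1) * (1 / hnorm n) := by
    have h3 : b' + skewMat (n + 1) y *ᵥ b = y (n + 2) • (fun i : Fin (n + 1) => pascal i (n + 2))
        - y (n + 1) • (fun i : Fin (n + 1) => pascal i n)
        + (y (n + 1) * pascal (n + 1) (n + 1)) • e := by
      funext i
      have h4 := skewMat_mulVec n y (fun k => pascal k (n + 1)) (by simp [hy]) i
      have hs : e i = if (i : ℕ) = n then 1 else 0 := by
        rw [he, Pi.single_apply]
        congr 1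
        rw [Fin.ext_iff]; simp
      rw [Pi.add_apply, h4, Pi.add_apply, Pi.sub_apply, Pi.smul_apply, Pi.smul_apply, Pi.smul_apply,
        hs, show b' i = pascal' i (n + 1) from rfl, pascal'_eq, ← hy, skew, Nat.add_sub_cancel]
      simp only [smul_eq_mul]
      split_ifs <;> ring
    rw [← dotProduct_add, h3, dotProduct_add, dotProduct_sub, dotProduct_smul, dotProduct_smul,
      dotProduct_smul, hβ, hvB, hve]
    simp only [smul_eq_mul]
  have hr : hnorm (n + 1) = ratio n * hnorm n := by
    rw [ratio]; field_simp
  rw [hp] at h1 h2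
  rw [heY, hvb, hve, hbw, hr] at h2
  have c1 := orth_coeff n
  have c2 := orth_coeff (n + 1)
  rw [Nat.add_sub_cancel, ratio_eq (n + 1)] at c2
  have hrn := ratio_eq n
  push_cast at c2
  constructor
  · rw [h1, hy]; push_cast; ring
  · have key : v ⬝ᵥ b' - (-(y n * orth (n + 1) (n - 1)) - v ⬝ᵥ skewMat (n + 1) y *ᵥ b +
        y (n + 1) * (((n : ℝ) + 1) / 2 * ((n + 1) / 2) + 1 / hnorm n *
          (1 + pascal (n + 1) (n + 1) - ratio n * hnorm n)))
        = y (n + 2) * (((n : ℝ) + 2) / 2 * ((n + 1) / 2) - orth (n + 2) n)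
          + y n * orth (n + 1) (n - 1) - y (n + 1) * (1 - ratio n + ((n : ℝ) + 1) ^ 2 / 4) := by
      have h5 : 1 / hnorm n * hnorm n = 1 := by field_simp
      linear_combination hvv + y (n + 1) * ratio n * h5
    rw [h2, key]
    have d1 : 4 * ((n : ℝ) + 1) ^ 2 - 1 = (2 * n + 1) * (2 * n + 3) := by ring
    have d2 : 4 * ((n : ℝ) + 1 + 1) ^ 2 - 1 = (2 * n + 3) * (2 * n + 5) := by ring
    have hη1 : (n : ℝ) * orth (n + 1) (n - 1) = -((n + 1 : ℝ) ^ 2 / 4 + (n + 1) / 2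
        - (2 * n + 3) * ratio n + (2 * n + 3) - n * (n + 1) * (n - 2) / 2) / 4 := by linarith
    have hη2 : ((n : ℝ) + 1) * orth (n + 2) n = -((n + 1 + 1 : ℝ) ^ 2 / 4 + (n + 1 + 1) / 2
        - (2 * (n + 1) + 3) * (3 * (9 * ((n : ℝ) + 1 + 1) ^ 2 - 4) / (4 * (4 * ((n : ℝ) + 1 + 1) ^ 2 - 1)))
        + (2 * (n + 1) + 3) - (n + 1) * (n + 1 + 1) * (n + 1 - 2) / 2) / 4 := by linarith
    have hη3 : orth (n + 2) n = (((n : ℝ) + 1) * orth (n + 2) n) / (n + 1) := by field_simp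
    rw [hη3, hη2]
    have hη4 : y n * orth (n + 1) (n - 1) = n / 2 * ((n : ℝ) * orth (n + 1) (n - 1)) := by
      simp only [hy]; ring
    rw [hη4, hη1, hrn, d1, d2]
    simp only [hy, hz]
    push_cast
    field_simp
    ring

end

/-! ### The determinant as a polynomial in `q` -/

section
open Matrix

variable {R : Type*} [CommRing R] [Algebra ℝ R]

lemma derivation_prod {ι : Type*} [DecidableEq ι] (θ : Derivation ℝ R R) (s : Finset ι)
    (f : ι → R) : θ (∏ i ∈ s, f i) = ∑ i ∈ s, (∏ j ∈ s.erase i, f j) * θ (f i) := by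
  induction s using Finset.induction_on with
  | empty => simp
  | insert a s ha ih =>
    rw [Finset.prod_insert ha, θ.leibniz, ih, Finset.sum_insert ha, Finset.erase_insert ha,
      smul_eq_mul, smul_eq_mul, Finset.mul_sum, add_comm]
    congr 1
    refine Finset.sum_congr rfl fun i hi => ?_
    have hia : a ≠ i := fun h => ha (h ▸ hi)
    rw [Finset.erase_insert_of_ne hia, Finset.prod_insert (by simp [ha])]
    ring

/-- Jacobi's formula for an arbitrary derivation. -/
lemma derivation_det {ι : Type*} [Fintype ι] [DecidableEq ι] (θ : Derivation ℝ R R)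
    (M : Matrix ι ι R) : θ M.det = trace (M.adjugate * M.map θ) := by
  have h1 : trace (M.adjugate * M.map θ) = ∑ i, (M.updateCol i fun k => θ (M k i)).det := by
    rw [trace]
    refine Finset.sum_congr rfl fun i _ => ?_
    rw [← cramer_apply, cramer_eq_adjugate_mulVec]
    rfl
  rw [h1, det_apply', map_sum]
  simp_rw [det_apply']
  rw [Finset.sum_comm]
  refine Finset.sum_congr rfl fun σ _ => ?_
  rw [θ.leibniz, θ.map_intCast, smul_zero, add_zero, smul_eq_mul, derivation_prod, Finset.mul_sum]
  refine Finset.sum_congr rfl fun i _ => ?_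
  congr 1
  rw [← Finset.mul_prod_erase univ _ (Finset.mem_univ i), updateCol_self, mul_comm]
  congr 1
  refine Finset.prod_congr rfl fun j hj => ?_
  rw [updateCol_ne (Finset.ne_of_mem_erase hj)]

lemma derivation_mul_map {ι : Type*} [Fintype ι] (θ : Derivation ℝ R R)
    (M N : Matrix ι ι R) : (M * N).map θ = M.map θ * N + M * N.map θ := by
  ext i j
  rw [Matrix.map_apply, mul_apply, map_sum, Matrix.add_apply, mul_apply, mul_apply,
    ← Finset.sum_add_distrib]
  refine Finset.sum_congr rfl fun k _ => ?_
  rw [θ.leibniz, smul_eq_mul, smul_eq_mul, Matrix.map_apply, Matrix.map_apply]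
  ring

/-- Second-order expansion of a determinant at a point where the matrix is invertible. -/
lemma jet_det {ι : Type*} [Fintype ι] [DecidableEq ι] (θ : Derivation ℝ R R) (ev : R →+* ℝ)
    (M : Matrix ι ι R) (m m1 m2 : Matrix ι ι ℝ) (hm : M.map ev = m)
    (hm1 : (M.map θ).map ev = m1) (hm2 : ((M.map θ).map θ).map ev = m2) (hd : m.det ≠ 0) :
    ev M.det = m.det ∧ ev (θ M.det) = m.det * trace (m⁻¹ * m1) ∧
    ev (θ (θ M.det)) = m.det * (trace (m⁻¹ * m1) ^ 2 +
      (trace (m⁻¹ * m2) - trace (m⁻¹ * m1 * (m⁻¹ * m1)))) := by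
  have hu : IsUnit m.det := isUnit_iff_ne_zero.mpr hd
  have hmm := mul_nonsing_inv m hu
  have h0 : ev M.det = m.det := by rw [RingHom.map_det, RingHom.mapMatrix_apply, hm]
  have hadj : M.adjugate.map ev = m.det • m⁻¹ := by
    have h := RingHom.map_adjugate ev M
    rw [RingHom.mapMatrix_apply, RingHom.mapMatrix_apply, hm] at h
    rw [h, nonsing_inv_apply m hu, smul_smul, hu.mul_val_inv, one_smul]
  have htr : ∀ A B : Matrix ι ι R, ev (trace (A * B)) = trace (A.map ev * B.map ev) := by
    intro A B
    rw [← Matrix.map_mul, trace, map_sum]; rfl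
  have h1 : ev (θ M.det) = m.det * trace (m⁻¹ * m1) := by
    rw [derivation_det, htr, hadj, hm1, smul_mul_assoc, trace_smul, smul_eq_mul]
  refine ⟨h0, h1, ?_⟩
  have hadj' : (M.adjugate.map θ).map ev =
      (m.det * trace (m⁻¹ * m1)) • m⁻¹ - m.det • (m⁻¹ * m1 * m⁻¹) := by
    have h := congrArg (fun A : Matrix ι ι R => (A.map θ).map ev) (adjugate_mul M)
    rw [derivation_mul_map] at h
    have e1 : (((M.det • (1 : Matrix ι ι R)).map θ).map ev) = (ev (θ M.det)) • (1 : Matrix ι ι ℝ) := by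
      ext i j
      by_cases hij : i = j <;> simp [hij]
    have e2 : ((M.adjugate.map θ * M + M.adjugate * M.map θ).map ev) =
        (M.adjugate.map θ).map ev * m + (m.det • m⁻¹) * m1 := by
      rw [Matrix.map_add _ (map_add ev), Matrix.map_mul, Matrix.map_mul, hm, hadj, hm1]
    rw [e1, e2, h1] at h
    have h3 := congrArg (· * m⁻¹) h
    simp only [add_mul, mul_assoc, hmm, mul_one, smul_mul_assoc, one_mul] at h3
    rw [mul_assoc m⁻¹ m1, ← h3]; abel
  rw [derivation_det, show θ (trace (M.adjugate * M.map θ)) =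
      trace ((M.adjugate * M.map θ).map θ) by rw [trace, map_sum]; rfl,
    derivation_mul_map, trace_add, map_add, htr, htr, hadj, hadj', hm1, hm2]
  simp only [sub_mul, trace_sub, smul_mul_assoc, trace_smul, smul_eq_mul, mul_assoc]
  ring

/-- The `Q`-analogue `P m s` of the binomial coefficient `binom(m+s, s)` counting weighted
decreasing sequences. -/
def qP {R : Type*} [CommRing R] (Q : R) : ℕ → ℕ → R
  | 0, s => Q ^ s
  | m + 1, s => Q ^ s * ∑ t ∈ range (s + 1), qP Q m t

/-- The Gaussian binomial coefficients, through their Pascal recursion. -/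
def qG {R : Type*} [CommRing R] (Q : R) : ℕ → ℕ → R
  | 0, _ => 1
  | _ + 1, 0 => 1
  | i + 1, j + 1 => qG Q i (j + 1) + Q ^ (i + 1) * qG Q (i + 1) j

lemma qG_zero_right {R : Type*} [CommRing R] (Q : R) (i : ℕ) : qG Q i 0 = 1 := by
  cases i <;> simp [qG]

lemma qP_eq {R : Type*} [CommRing R] (Q : R) (j i : ℕ) : qP Q j i = Q ^ i * qG Q i j := by
  induction j generalizing i with
  | zero => rw [qP, qG_zero_right, mul_one]
  | succ j ihj =>
    induction i with
    | zero => simp [qP, qG, ihj]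
    | succ i ihi =>
      rw [qP, Finset.sum_range_succ, mul_add, ihj, qG]
      rw [qP] at ihi
      linear_combination Q * ihi

end

section
open Polynomial Matrix

/-- The derivation `q d/dq` of `ℝ[X]`, where `q = X ^ 2`. -/
noncomputable def qD : Derivation ℝ ℝ[X] ℝ[X] := (C (1 / 2 : ℝ) * X) • Polynomial.derivative'

lemma qD_X_pow (n : ℕ) : qD (X ^ n) = C ((n : ℝ) / 2) * X ^ n := by
  have h : qD (X ^ n) = (C (1 / 2 : ℝ) * X) * derivative (X ^ n) := rfl
  rw [h, derivative_X_pow]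
  rcases n with _ | n
  · simp
  · rw [Nat.add_sub_cancel, pow_succ' X n, show ((n + 1 : ℕ) : ℝ) / 2 = ((n + 1 : ℕ) : ℝ) * (1 / 2) by ring,
      C_mul (a := ((n + 1 : ℕ) : ℝ))]
    ring

lemma qD_C_mul (a : ℝ) (p : ℝ[X]) : qD (C a * p) = C a * qD p := by
  rw [← smul_eq_C_mul, qD.map_smul, smul_eq_C_mul]

lemma qD_X_pow_mul (n : ℕ) (p : ℝ[X]) :
    qD (X ^ n * p) = C ((n : ℝ) / 2) * (X ^ n * p) + X ^ n * qD p := by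
  rw [qD.leibniz, qD_X_pow, smul_eq_mul, smul_eq_mul]; ring

/-- Evaluation at `q = 1`. -/
noncomputable def ev1 : ℝ[X] →+* ℝ := evalRingHom 1

lemma ev1_jets (n : ℕ) (p : ℝ[X]) :
    ev1 (X ^ n * p) = ev1 p ∧ ev1 (qD (X ^ n * p)) = n / 2 * ev1 p + ev1 (qD p) ∧
    ev1 (qD (qD (X ^ n * p))) = (n / 2) ^ 2 * ev1 p + n * ev1 (qD p) + ev1 (qD (qD p)) := by
  have hX : ev1 X = 1 := by simp [ev1]
  have hC : ∀ a, ev1 (C a) = a := by simp [ev1]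
  refine ⟨by simp [hX], ?_, ?_⟩
  · rw [qD_X_pow_mul]; simp [hX, hC]
  · rw [qD_X_pow_mul, map_add, qD_C_mul, qD_X_pow_mul, qD_X_pow_mul]
    simp only [map_add, map_mul, map_pow, hX, hC, one_pow, one_mul]
    ring

lemma pascal_rec (i j : ℕ) : pascal (i + 1) (j + 1) = pascal i (j + 1) + pascal (i + 1) j := by
  rw [pascal_succ_left, pascal_succ_right, pascal_succ_left]
  push_cast
  field_simp
  ring

lemma qG_jets (i j : ℕ) :
    ev1 (qG (X ^ 6) i j) = pascal i j ∧
    ev1 (qD (qG (X ^ 6) i j)) = pascal i j * (3 / 2 * i * j) ∧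
    ev1 (qD (qD (qG (X ^ 6) i j))) =
      pascal i j * ((3 / 2 * i * j) ^ 2 + 3 / 4 * i * j * (i + j + 1)) := by
  induction i generalizing j with
  | zero => simp [qG, pascal_zero_left]
  | succ i ihi =>
    induction j with
    | zero => simp [qG, pascal_zero_right]
    | succ j ihj =>
      obtain ⟨a0, a1, a2⟩ := ihi (j + 1)
      obtain ⟨b0, b1, b2⟩ := ihj
      obtain ⟨c0, c1, c2⟩ := ev1_jets (6 * (i + 1)) (qG (X ^ 6) (i + 1) j)
      rw [qG, ← pow_mul]
      simp only [map_add, a0, a1, a2, c0, c1, c2, b0, b1, b2]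
      rw [pascal_rec, pascal_succ_left, pascal_succ_right]
      push_cast
      refine ⟨rfl, ?_, ?_⟩ <;> field_simp <;> ring

/-- The symmetrised `q`-Pascal matrix. -/
noncomputable def qA (i j : ℕ) : ℝ[X] := X ^ (3 * i + 3 * j + 2) * qG (X ^ 6) i j

lemma qA_jets (i j : ℕ) :
    ev1 (qA i j) = pascal i j ∧ ev1 (qD (qA i j)) = pascal' i j ∧
    ev1 (qD (qD (qA i j))) = pascalSnd i j := by
  obtain ⟨a0, a1, a2⟩ := qG_jets i j
  obtain ⟨c0, c1, c2⟩ := ev1_jets (3 * i + 3 * j + 2) (qG (X ^ 6) i j)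
  rw [qA, c0, c1, c2, a0, a1, a2, pascal', pascalSnd]
  push_cast
  refine ⟨rfl, ?_, ?_⟩ <;> ring

/-- The determinant `det (1 + (q P_{j,i}))` is that of its symmetrised version. -/
lemma det_symmetrise (r : ℕ) :
    (1 + Matrix.of fun i j : Fin r => (X : ℝ[X]) ^ 2 * qP (X ^ 6) j i).det =
      (1 + Matrix.of fun i j : Fin r => qA i j).det := by
  set Δ : Matrix (Fin r) (Fin r) ℝ[X] := Matrix.diagonal fun i => X ^ (3 * (i : ℕ))
  have hΔ : Δ.det ≠ 0 := by
    rw [det_diagonal]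
    exact Finset.prod_ne_zero_iff.mpr fun i _ => pow_ne_zero _ X_ne_zero
  have h : (1 + Matrix.of fun i j : Fin r => (X : ℝ[X]) ^ 2 * qP (X ^ 6) j i) * Δ =
      Δ * (1 + Matrix.of fun i j : Fin r => qA i j) := by
    rw [add_mul, mul_add, one_mul, mul_one]
    congr 1
    ext1 i j
    rw [mul_diagonal, diagonal_mul, of_apply, of_apply, qP_eq, qA]
    ring
  have h2 := congrArg Matrix.det h
  rw [det_mul, det_mul, mul_comm] at h2
  exact mul_left_cancel₀ hΔ h2

/-- Second-order expansion at `q = 1` of the generating function in determinantal form. -/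
lemma gf_jets (n : ℕ) :
    let D := (1 + Matrix.of fun i j : Fin (n + 1) => (X : ℝ[X]) ^ 2 * qP (X ^ 6) j i).det
    let d := (MM (n + 1)).det
    ev1 D = d ∧ ev1 (qD D) = d * (((n : ℝ) + 1) ^ 3 / 2) ∧
    ev1 (qD (qD D)) = d * ((((n : ℝ) + 1) ^ 3 / 2) ^ 2
      + (3 / 4 * ((n : ℝ) + 1) ^ 4 - 1 / 2 * ((n : ℝ) + 1) ^ 2)) := by
  intro D d
  have h1 : ∀ i j : Fin (n + 1), qD ((1 : Matrix (Fin (n + 1)) (Fin (n + 1)) ℝ[X]) i j) = 0 := by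
    intro i j
    rw [Matrix.one_apply]; split_ifs <;> simp
  obtain ⟨t1, t2⟩ := jets_value n
  rw [show D = _ from det_symmetrise (n + 1)]
  have h := jet_det qD ev1 (1 + Matrix.of fun i j : Fin (n + 1) => qA i j) (MM (n + 1))
    (Matrix.of fun i j : Fin (n + 1) => pascal' i j)
    (Matrix.of fun i j : Fin (n + 1) => pascalSnd i j)
    (by
      ext i j
      rw [Matrix.map_apply, Matrix.add_apply, map_add, of_apply, (qA_jets i j).1, MM,
        Matrix.add_apply, of_apply, Matrix.one_apply, Matrix.one_apply]
      split_ifs <;> simp)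
    (by
      ext i j
      rw [Matrix.map_apply, Matrix.map_apply, Matrix.add_apply, map_add, of_apply, h1, zero_add,
        (qA_jets i j).2.1, of_apply])
    (by
      ext i j
      rw [Matrix.map_apply, Matrix.map_apply, Matrix.map_apply, Matrix.add_apply, map_add, of_apply,
        h1, zero_add, (qA_jets i j).2.2, of_apply])
    (MM_det_ne_zero _)
  rw [t1, t2] at h
  exact h

end

/-! ### One step of the lattice paths -/

section
open Matrix

variable {R : Type*} [CommRing R]

/-- `det (1 + A)` is the sum of all principal minors of `A`. -/
lemma det_one_add_eq_sum_minors {r : ℕ} (A : Matrix (Fin r) (Fin r) R) :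
    (1 + A).det = ∑ S : Finset (Fin r),
      (A.submatrix (Subtype.val : S → Fin r) (Subtype.val : S → Fin r)).det := by
  rw [add_comm]
  have h := (detRowAlternating : (Fin r → R) [⋀^Fin r]→ₗ[R] R).map_add_univ
    (fun i => A i) (fun i => (1 : Matrix (Fin r) (Fin r) R) i)
  refine h.trans (Finset.sum_congr rfl fun S _ => ?_)
  exact det_piecewise_one_eq_submatrix_det A S

/-- Subtracting from each row the next one does not change the determinant. -/
lemma det_row_sub_succ {n : ℕ} {A B : Matrix (Fin (n + 1)) (Fin (n + 1)) R}
    (h0 : ∀ j, A (Fin.last n) j = B (Fin.last n) j)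
    (h1 : ∀ (i : Fin n) j, A i.castSucc j = B i.castSucc j + A i.succ j) :
    A.det = B.det := by
  rw [← det_submatrix_equiv_self Fin.revPerm A, ← det_submatrix_equiv_self Fin.revPerm B]
  refine det_eq_of_forall_row_eq_smul_add_pred (fun _ => 1) (fun j => ?_) fun i j => ?_
  · simp [h0]
  · simp [Fin.rev_succ, Fin.rev_castSucc, h1]

/-- Multilinearity of the determinant in the rows. -/
lemma det_sum_rows {k : ℕ} (I : Fin k → Finset ℕ) (f : Fin k → ℕ → R) :
    (Matrix.of fun i j => ∑ t ∈ I i, f j t).det =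
      ∑ t ∈ Fintype.piFinset I, (Matrix.of fun i j => f j (t i)).det := by
  have h := (detRowAlternating : (Fin k → R) [⋀^Fin k]→ₗ[R] R).toMultilinearMap.map_sum_finset
    (fun _ t => fun j => f j t) I
  refine Eq.trans ?_ h
  change det _ = det _
  congr 1
  ext i j
  simp

/-- The set of positions to which the `i`-th of the particles `s 0 > s 1 > ⋯` may jump:
at most `s i` and larger than the position `s (i + 1)` of its lower neighbour, if there is one. -/
def jumpSet {k : ℕ} (s : Fin k → ℕ) (i : Fin k) : Finset ℕ :=
  (range (s i + 1)).filter fun t => ∀ j : Fin k, (j : ℕ) = i + 1 → s j < t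

lemma det_partial_sums {k : ℕ} {s : Fin k → ℕ} (hs : StrictAnti s) (f : Fin k → ℕ → R) :
    (Matrix.of fun i j => ∑ t ∈ range (s i + 1), f j t).det =
      (Matrix.of fun i j => ∑ t ∈ jumpSet s i, f j t).det := by
  cases k with
  | zero => simp
  | succ n =>
    refine det_row_sub_succ (fun j => ?_) fun i j => ?_
    · simp only [of_apply]
      congr 1
      ext t
      simp only [jumpSet, mem_filter, mem_range, iff_self_and, Fin.val_last]
      intro _ j hj
      omega
    · have hlt : s i.succ < s i.castSucc := hs (by simp [Fin.lt_def])
      have e : jumpSet s i.castSucc = (range (s i.castSucc + 1)) \ (range (s i.succ + 1)) := by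
        ext t
        simp only [jumpSet, mem_filter, mem_range, mem_sdiff, Fin.val_castSucc]
        refine and_congr_right fun _ => ⟨fun h => ?_, fun h j hj => ?_⟩
        · have := h i.succ (by simp)
          omega
        · have : j = i.succ := Fin.ext (by simpa using hj)
          subst this
          omega
      simp only [of_apply, e]
      rw [Finset.sum_sdiff]
      exact range_subset_range.2 (by omega)

/-- One time step of the lattice paths when no path ends. -/
lemma lgv_step_stay (Q : R) {k b : ℕ} {s e : Fin k → ℕ} (hs : StrictAnti s)
    (he : ∀ j, b < e j) :
    (Matrix.of fun i j => qP Q (e j - b) (s i)).det =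
      Q ^ (∑ i, s i) * ∑ t ∈ Fintype.piFinset (jumpSet s),
        (Matrix.of fun i j => qP Q (e j - (b + 1)) (t i)).det := by
  rw [← det_sum_rows _ fun j t => qP Q (e j - (b + 1)) t, ← det_partial_sums hs,
    ← Finset.prod_pow_eq_pow_sum, ← det_mul_column]
  congr 1
  ext i j
  obtain ⟨m, hm⟩ : ∃ m, e j = b + m + 1 := ⟨e j - b - 1, by have := he j; omega⟩
  simp only [of_apply, hm]
  rw [show b + m + 1 - b = m + 1 by omega, show b + m + 1 - (b + 1) = m by omega, qP]

/-- One time step of the lattice paths when the lowest path ends. -/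
lemma lgv_step_exit (Q : R) {k b : ℕ} {s e : Fin (k + 1) → ℕ} (hs : StrictAnti s)
    (he : ∀ j : Fin k, b < e j.castSucc) (hb : e (Fin.last k) = b) :
    (Matrix.of fun i j => qP Q (e j - b) (s i)).det =
      Q ^ (∑ i, s i) * ∑ t ∈ Fintype.piFinset fun i : Fin k => jumpSet s i.castSucc,
        (Matrix.of fun i j : Fin k => qP Q (e j.castSucc - (b + 1)) (t i)).det := by
  -- the column of the ending path, as a column of partial sums
  let f : Fin (k + 1) → ℕ → R := fun j t =>
    if j = Fin.last k then (if t = 0 then 1 else 0) else qP Q (e j - (b + 1)) t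
  have h1 : (Matrix.of fun i j => qP Q (e j - b) (s i)) =
      Matrix.of fun i j => Q ^ s i *
        (Matrix.of fun i j => ∑ t ∈ range (s i + 1), f j t) i j := by
    ext i j
    simp only [of_apply, f]
    refine Fin.lastCases ?_ (fun j => ?_) j
    · simp [hb, qP]
    · obtain ⟨m, hm⟩ : ∃ m, e j.castSucc = b + m + 1 :=
        ⟨e j.castSucc - b - 1, by have := he j; omega⟩
      simp only [hm, Fin.castSucc_ne_last, if_false]
      rw [show b + m + 1 - b = m + 1 by omega, show b + m + 1 - (b + 1) = m by omega, qP]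
  rw [h1, det_mul_column, Finset.prod_pow_eq_pow_sum, det_partial_sums hs,
    ← det_sum_rows _ fun j t => qP Q (e j.castSucc - (b + 1)) t]
  congr 1
  rw [det_succ_column _ (Fin.last k), Fin.sum_univ_castSucc, Finset.sum_eq_zero, zero_add]
  · have : ∑ t ∈ jumpSet s (Fin.last k), f (Fin.last k) t = 1 := by
      simp only [f, if_true]
      rw [Finset.sum_ite_eq', if_pos]
      simp only [jumpSet, mem_filter, mem_range, Fin.val_last]
      exact ⟨by omega, fun j hj => by omega⟩
    simp only [of_apply, this, Fin.val_last, ← two_mul, pow_mul]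
    simp only [even_two, Even.neg_pow, one_pow, one_mul]
    congr 1
    ext i j
    simp [f, Fin.castSucc_ne_last]
  · intro i _
    have : ∑ t ∈ jumpSet s i.castSucc, f (Fin.last k) t = 0 := by
      refine Finset.sum_eq_zero fun t ht => ?_
      simp only [f, if_true]
      rw [if_neg]
      simp only [jumpSet, mem_filter] at ht
      have := ht.2 i.succ (by simp)
      omega
    simp [this]
end

/-- The number of elements of `S` that are at least `a`. -/
def geCount (S : Finset ℕ) (a : ℕ) : ℕ := #{x ∈ S | a ≤ x}

lemma le_iff_lt_geCount {k : ℕ} {s : Fin k → ℕ} (hs : StrictAnti s) (a : ℕ) (i : Fin k) :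
    a ≤ s i ↔ (i : ℕ) < geCount (univ.image s) a := by
  have h : geCount (univ.image s) a = #{i | a ≤ s i} := by
    rw [geCount, Finset.filter_image, Finset.card_image_of_injective _ hs.injective]
  rw [h]
  constructor
  · intro ha
    have : Finset.Iic i ⊆ ({i | a ≤ s i} : Finset (Fin k)) := fun j hj => by
      simp only [mem_filter, mem_univ, true_and]
      exact ha.trans (hs.antitone (by simpa using hj))
    have := Finset.card_le_card this
    simp at this
    omega
  · intro hi
    by_contra! ha
    have : ({i | a ≤ s i} : Finset (Fin k)) ⊆ Finset.Iio i := fun j hj => by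
      simp only [mem_filter, mem_univ, true_and] at hj
      rw [Finset.mem_Iio]
      by_contra! hij
      have := hs.antitone hij
      omega
    have := Finset.card_le_card this
    simp at this
    omega

/-- The interlacing relation between two consecutive sets of particles `S = {s 0 > s 1 > ⋯}` and
`T = {t 0 > t 1 > ⋯}`, expressed by counting functions: `s 0 ≥ t 0 > s 1 ≥ t 1 > ⋯`, where the
last particle of `S` may be missing in `T` (see `inter_iff`). -/
def Interlaces (S T : Finset ℕ) : Prop :=
  ∀ a, geCount T a ≤ geCount S a ∧ geCount S a ≤ geCount T (a + 1) + 1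

lemma geCount_le_card (S : Finset ℕ) (a : ℕ) : geCount S a ≤ #S := card_filter_le _ _

lemma exists_lt_of_lt_geCount {k : ℕ} {s : Fin k → ℕ} (hs : StrictAnti s) {a n : ℕ}
    (h : n < geCount (univ.image s) a) : ∃ i : Fin k, (i : ℕ) = n ∧ a ≤ s i := by
  have hk : n < k := by
    have := h.trans_le (geCount_le_card _ _)
    rwa [card_image_of_injective _ hs.injective, card_fin] at this
  exact ⟨⟨n, hk⟩, rfl, (le_iff_lt_geCount hs a ⟨n, hk⟩).2 h⟩

/-- Interlacing of sets in terms of their decreasing enumerations. -/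
lemma inter_iff {k k' : ℕ} {s : Fin k → ℕ} {t : Fin k' → ℕ} (hs : StrictAnti s)
    (ht : StrictAnti t) (h1 : k' ≤ k) (h2 : k ≤ k' + 1) :
    Interlaces (univ.image s) (univ.image t) ↔
      ∀ j : Fin k', t j ∈ jumpSet s (j.castLE h1) := by
  simp only [jumpSet, mem_filter, mem_range]
  constructor
  · intro h j
    constructor
    · have := ((le_iff_lt_geCount ht (t j) j).1 le_rfl).trans_le (h _).1
      have := (le_iff_lt_geCount hs (t j) (j.castLE h1)).2 this
      omega
    · intro i hi
      simp only [Fin.val_castLE] at hi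
      have h3 := ((le_iff_lt_geCount hs (s i) i).1 le_rfl).trans_le (h _).2
      have := (le_iff_lt_geCount ht (s i + 1) j).2 (by omega)
      omega
  · intro h a
    constructor
    · by_contra! hlt
      obtain ⟨i, hi, hai⟩ := exists_lt_of_lt_geCount ht hlt
      have := (le_iff_lt_geCount hs a (i.castLE h1)).1 (by have := (h i).1; omega)
      simp only [Fin.val_castLE] at this
      omega
    · by_contra! hlt
      obtain ⟨i, hi, hai⟩ := exists_lt_of_lt_geCount hs hlt
      have hik : geCount (univ.image t) (a + 1) < k' := by omega
      have h3 := (h ⟨_, hik⟩).2 i (by simpa using hi)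
      have := (le_iff_lt_geCount ht (a + 1) ⟨_, hik⟩).1 (by omega)
      simp at this

/-- The decreasing enumeration of a finite set of natural numbers. -/
def decEnum (S : Finset ℕ) {k : ℕ} (h : #S = k) : Fin k → ℕ := fun i => S.orderEmbOfFin h i.rev

lemma decEnum_strictAnti (S : Finset ℕ) {k : ℕ} (h : #S = k) : StrictAnti (decEnum S h) :=
  fun _ _ hij => (S.orderEmbOfFin h).strictMono (Fin.rev_lt_rev.2 hij)

lemma image_decEnum (S : Finset ℕ) {k : ℕ} (h : #S = k) : univ.image (decEnum S h) = S := by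
  ext x
  have := S.range_orderEmbOfFin h
  simp only [mem_image, mem_univ, true_and, decEnum]
  rw [← Finset.mem_coe (s := S), ← this]
  constructor
  · rintro ⟨i, rfl⟩; exact ⟨_, rfl⟩
  · rintro ⟨i, rfl⟩; exact ⟨i.rev, by simp⟩

lemma strictAnti_eq_of_image {k : ℕ} {s t : Fin k → ℕ} (hs : StrictAnti s) (ht : StrictAnti t)
    (h : univ.image s = univ.image t) : s = t := by
  funext i
  apply le_antisymm
  · rw [le_iff_lt_geCount ht, ← h, ← le_iff_lt_geCount hs]
  · rw [le_iff_lt_geCount hs, h, ← le_iff_lt_geCount ht]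

/-! ### The Lindström–Gessel–Viennot determinant -/

section
variable {R : Type*} [CommRing R]

lemma jump_strictAnti {k k' : ℕ} {s : Fin k → ℕ} (hs : StrictAnti s) (h1 : k' ≤ k)
    {t : Fin k' → ℕ} (ht : ∀ j, t j ∈ jumpSet s (j.castLE h1)) : StrictAnti t := by
  intro i j hij
  simp only [jumpSet, mem_filter, mem_range] at ht
  have hi := (ht i).2 ⟨i + 1, by have := j.2; have : (i : ℕ) < j := hij; omega⟩ (by simp)
  have hj := (ht j).1
  have : s (j.castLE h1) ≤ s ⟨i + 1, by have := j.2; have : (i : ℕ) < j := hij; omega⟩ :=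
    hs.antitone (by have : (i : ℕ) < j := hij; simp only [Fin.le_def, Fin.val_castLE]; omega)
  omega

open Classical in
/-- Configurations after a time step, as tuples and as interlacing sets. -/
lemma sum_jump_eq_sum_interlaces {r k k' : ℕ} {s : Fin k → ℕ} (hs : StrictAnti s)
    (hr : ∀ i, s i < r) (h1 : k' ≤ k) (h2 : k ≤ k' + 1) (g : Finset ℕ → R)
    (hg : ∀ T, #T ≠ k' → g T = 0) :
    ∑ t ∈ Fintype.piFinset fun j : Fin k' => jumpSet s (j.castLE h1), g (univ.image t) =
      ∑ T ∈ (range r).powerset with Interlaces (univ.image s) T, g T := by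
  have hz : ∑ T ∈ (range r).powerset with Interlaces (univ.image s) T, g T =
      ∑ T ∈ ((range r).powerset.filter fun T => Interlaces (univ.image s) T) with #T = k', g T := by
    symm
    apply Finset.sum_filter_of_ne
    intro T _ h
    by_contra h'
    exact h (hg T h')
  rw [hz]
  refine Finset.sum_bij (fun t _ => univ.image t) ?_ ?_ ?_ (fun _ _ => rfl)
  · intro t ht
    rw [Fintype.mem_piFinset] at ht
    have hst := jump_strictAnti hs h1 ht
    simp only [mem_filter, mem_powerset]
    refine ⟨⟨?_, (inter_iff hs hst h1 h2).2 ht⟩, ?_⟩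
    · intro x hx
      simp only [mem_image, mem_univ, true_and] at hx
      obtain ⟨j, rfl⟩ := hx
      have := ht j
      simp only [jumpSet, mem_filter, mem_range] at this
      rw [mem_range]
      have := hr (j.castLE h1)
      omega
    · rw [card_image_of_injective _ hst.injective, card_fin]
  · intro t ht t' ht' h
    rw [Fintype.mem_piFinset] at ht ht'
    exact strictAnti_eq_of_image (jump_strictAnti hs h1 ht) (jump_strictAnti hs h1 ht') h
  · intro T hT
    simp only [mem_filter, mem_powerset] at hT
    refine ⟨decEnum T hT.2, ?_, image_decEnum T hT.2⟩
    rw [Fintype.mem_piFinset]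
    refine (inter_iff hs (decEnum_strictAnti T hT.2) h1 h2).1 ?_
    rw [image_decEnum]
    exact hT.1.2

open Classical in
/-- The generating function of the families of `m` steps of non-intersecting lattice paths that
start from the particle configuration `S` at time `b`; there must be `κ b'` particles
present at time `b'`, and a particle at position `x` contributes `Q ^ x` at each time. -/
noncomputable def pathSum (r : ℕ) (Q : R) (κ : ℕ → ℕ) : ℕ → ℕ → Finset ℕ → R
  | 0, b, S => if #S = κ b then 1 else 0
  | m + 1, b, S => if #S = κ b then Q ^ (∑ x ∈ S, x) *
      ∑ T ∈ (range r).powerset with Interlaces S T, pathSum r Q κ m (b + 1) T else 0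

lemma pathSum_eq_zero (r : ℕ) (Q : R) (κ : ℕ → ℕ) (m b : ℕ) (S : Finset ℕ) (h : #S ≠ κ b) :
    pathSum r Q κ m b S = 0 := by
  cases m <;> simp [pathSum, h]

/-- The Lindström–Gessel–Viennot determinant for this model: `e j` is the time at which the `j`-th
path ends. -/
lemma lgv (r : ℕ) (Q : R) (κ : ℕ → ℕ) (m : ℕ) : ∀ (b k : ℕ) (s e : Fin k → ℕ), StrictAnti s →
    StrictAnti e → (∀ i, s i < r) → (∀ j, b ≤ e j) → (∀ j, e j < b + m) →
    (∀ b', b ≤ b' → κ b' = #{j | b' ≤ e j}) →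
    (Matrix.of fun i j => qP Q (e j - b) (s i)).det = pathSum r Q κ m b (univ.image s) := by
  induction m with
  | zero =>
    intro b k s e hs he hr hb hm hκ
    have : k = 0 := by
      by_contra h
      have := hb ⟨0, by omega⟩
      have := hm ⟨0, by omega⟩
      omega
    subst this
    simp [pathSum, hκ b le_rfl]
  | succ m ih =>
    intro b k s e hs he hr hb hm hκ
    have hcard : #(univ.image s) = k := by
      rw [card_image_of_injective _ hs.injective, card_fin]
    have hκb : κ b = k := by
      rw [hκ b le_rfl, Finset.filter_true_of_mem fun j _ => hb j, card_fin]
    have hsum : ∑ x ∈ univ.image s, x = ∑ i, s i :=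
      Finset.sum_image fun i _ j _ h => hs.injective h
    rw [pathSum, if_pos (by rw [hcard, hκb]), hsum]
    by_cases hex : ∀ j, b < e j
    · rw [lgv_step_stay Q hs hex]
      congr 1
      have hκ1 : κ (b + 1) = k := by
        rw [hκ _ (by omega), Finset.filter_true_of_mem fun j _ => Nat.succ_le_of_lt (hex j), card_fin]
      rw [← sum_jump_eq_sum_interlaces hs hr le_rfl (by omega) (pathSum r Q κ m (b + 1))
        (fun T hT => pathSum_eq_zero _ _ _ _ _ _ (by rwa [hκ1]))]
      refine Finset.sum_congr rfl fun t ht => ?_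
      rw [Fintype.mem_piFinset] at ht
      refine ih (b + 1) k t e (jump_strictAnti hs le_rfl ht) he (fun i => ?_) hex
        (fun j => by have := hm j; omega) (fun b' hb' => hκ b' (by omega))
      have := ht i
      simp only [jumpSet, mem_filter, mem_range] at this
      have := hr (i.castLE le_rfl)
      omega
    · push Not at hex
      obtain ⟨j₀, hj₀⟩ := hex
      obtain ⟨n, rfl⟩ : ∃ n, k = n + 1 := ⟨k - 1, by have := j₀.2; omega⟩
      have hlast : e (Fin.last n) = b :=
        le_antisymm ((he.antitone (Fin.le_last _)).trans hj₀) (hb _)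
      have hlt : ∀ j : Fin n, b < e j.castSucc := fun j =>
        (hb (Fin.last n)).trans_lt (he (Fin.castSucc_lt_last j))
      have hκ' : ∀ b', b + 1 ≤ b' → κ b' = #{j : Fin n | b' ≤ e j.castSucc} := by
        intro b' hb'
        rw [hκ b' (by omega), Finset.card_filter, Finset.card_filter, Fin.sum_univ_castSucc,
          if_neg (by omega), add_zero]
      have hκ1 : κ (b + 1) = n := by
        rw [hκ' _ le_rfl, Finset.filter_true_of_mem fun j _ => Nat.succ_le_of_lt (hlt j), card_fin]
      rw [lgv_step_exit Q hs hlt hlast]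
      congr 1
      rw [← sum_jump_eq_sum_interlaces hs hr (Nat.le_succ n) le_rfl (pathSum r Q κ m (b + 1))
        (fun T hT => pathSum_eq_zero _ _ _ _ _ _ (by rwa [hκ1]))]
      refine Finset.sum_congr rfl fun t ht => ?_
      have ht' := ht
      rw [Fintype.mem_piFinset] at ht'
      refine ih (b + 1) n t (fun j => e j.castSucc) (jump_strictAnti hs (Nat.le_succ n) ht')
        (fun i j hij => he (by simpa using hij)) (fun i => ?_) hlt
        (fun j => by have := hm j.castSucc; omega) hκ'
      have := ht' i
      simp only [jumpSet, mem_filter, mem_range] at this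
      have := hr (i.castLE (Nat.le_succ n))
      omega

/-- The determinant as a sum over the starting configurations of the paths; the paths starting
from `S` end at the times in `S`. -/
lemma det_eq_sum_pathSum (r : ℕ) (q Q : R) :
    (1 + Matrix.of fun i j : Fin r => q * qP Q j i).det =
      ∑ S ∈ (range r).powerset, q ^ #S * pathSum r Q (geCount S) r 0 S := by
  rw [det_one_add_eq_sum_minors]
  refine Finset.sum_bij (fun S _ => S.map Fin.valEmbedding) ?_ ?_ ?_ ?_
  · intro S _
    simp only [mem_powerset]
    intro x hx
    simp only [mem_map] at hx
    obtain ⟨y, _, rfl⟩ := hx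
    simp
  · intro S _ T _ h
    exact Finset.map_injective _ h
  · intro T hT
    simp only [mem_powerset] at hT
    refine ⟨univ.filter fun i : Fin r => (i : ℕ) ∈ T, mem_univ _, ?_⟩
    ext x
    simp only [mem_map, mem_filter, mem_univ, true_and, Fin.valEmbedding_apply]
    constructor
    · rintro ⟨y, hy, rfl⟩; exact hy
    · intro hx; exact ⟨⟨x, by simpa using hT hx⟩, hx, rfl⟩
  · intro S _
    let d : Fin #S ≃ S := Fin.revPerm.trans (S.orderIsoOfFin rfl).toEquiv
    let s : Fin #S → ℕ := fun i => ((d i : Fin r) : ℕ)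
    have hs : StrictAnti s := fun i j hij => by
      simp only [s, d]
      exact (S.orderIsoOfFin rfl).strictMono (Fin.rev_lt_rev.2 hij)
    have him : univ.image s = S.map Fin.valEmbedding := by
      ext x
      simp only [mem_image, mem_univ, true_and, mem_map, Fin.valEmbedding_apply, s]
      constructor
      · rintro ⟨i, rfl⟩; exact ⟨d i, (d i).2, rfl⟩
      · rintro ⟨y, hy, rfl⟩; exact ⟨d.symm ⟨y, hy⟩, by simp⟩
    rw [← him, ← lgv r Q (geCount (univ.image s)) r 0 _ s s hs hs (fun i => (d i : Fin r).2)
      (fun _ => Nat.zero_le _) (fun i => by rw [zero_add]; exact (d i : Fin r).2),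
      ← Matrix.det_submatrix_equiv_self d]
    · rw [card_image_of_injective _ hs.injective, card_fin]
      have := Matrix.det_smul (Matrix.of fun i j => qP Q (s j - 0) (s i)) q
      rw [Fintype.card_fin] at this
      rw [← this]
      congr 1
    · intro b' _
      rw [geCount, Finset.filter_image, card_image_of_injective _ hs.injective]
end

/-! ### Chains of interlacing sets -/

open Classical in
/-- All families of `m` steps of non-intersecting lattice paths as in `pathSum`. -/
noncomputable def chains (r : ℕ) (κ : ℕ → ℕ) (m b : ℕ) : Finset (Fin (m + 1) → Finset ℕ) :=
  (Fintype.piFinset fun _ => (range r).powerset).filter fun c =>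
    (∀ i, #(c i) = κ (b + i)) ∧ ∀ i : Fin m, Interlaces (c i.castSucc) (c i.succ)

lemma mem_chains {r : ℕ} {κ : ℕ → ℕ} {m b : ℕ} {c : Fin (m + 1) → Finset ℕ} :
    c ∈ chains r κ m b ↔ (∀ i, c i ⊆ range r) ∧ (∀ i, #(c i) = κ (b + i)) ∧
      ∀ i : Fin m, Interlaces (c i.castSucc) (c i.succ) := by
  simp [chains, Fintype.mem_piFinset]

section
variable {R : Type*} [CommRing R]

/-- Unfolding the recursion that defines `pathSum`. -/
lemma pathSum_eq_sum_chains (r : ℕ) (Q : R) (κ : ℕ → ℕ) (m : ℕ) : ∀ (b : ℕ) (S : Finset ℕ),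
    S ⊆ range r → pathSum r Q κ m b S =
      ∑ c ∈ chains r κ m b with c 0 = S, Q ^ (∑ i : Fin m, ∑ x ∈ c i.castSucc, x) := by
  classical
  induction m with
  | zero =>
    intro b S hS
    rw [pathSum]
    split_ifs with h
    · have : ({c ∈ chains r κ 0 b | c 0 = S} : Finset (Fin 1 → Finset ℕ)) = {fun _ => S} := by
        ext c
        simp only [mem_filter, mem_chains, mem_singleton]
        constructor
        · rintro ⟨-, h⟩
          funext i
          rw [Subsingleton.elim i 0, h]
        · rintro rfl
          simpa [hS] using h
      rw [this]
      simp
    · rw [Finset.sum_eq_zero]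
      intro c hc
      simp only [mem_filter, mem_chains] at hc
      exact absurd (by simpa [hc.2] using hc.1.2.1 0) h
  | succ m ih =>
    intro b S hS
    rw [pathSum]
    split_ifs with h
    · rw [← Finset.sum_fiberwise_of_maps_to (s := (chains r κ (m + 1) b).filter fun c => c 0 = S)
        (t := (range r).powerset.filter fun T => Interlaces S T) (g := fun c => c 1)]
      · rw [Finset.mul_sum]
        refine Finset.sum_congr rfl fun T hT => ?_
        simp only [mem_filter, mem_powerset] at hT
        rw [ih _ _ hT.1, Finset.mul_sum]
        refine Finset.sum_bij' (fun c _ => (Fin.cons S c : Fin (m + 2) → Finset ℕ))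
          (fun c _ => Fin.tail c) ?_ ?_ ?_ ?_ ?_
        · intro c hc
          simp only [mem_filter, mem_chains] at hc ⊢
          obtain ⟨⟨h1, h2, h3⟩, h4⟩ := hc
          refine ⟨⟨⟨?_, ?_, ?_⟩, rfl⟩, ?_⟩
          · intro i
            refine Fin.cases ?_ (fun i => ?_) i
            · simpa using hS
            · simpa using h1 i
          · intro i
            refine Fin.cases ?_ (fun i => ?_) i
            · simpa using h
            · simpa [add_assoc, add_comm, add_left_comm] using h2 i
          · intro i
            refine Fin.cases ?_ (fun i => ?_) i
            · simpa [h4] using hT.2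
            · simpa using h3 i
          · rw [← Fin.succ_zero_eq_one, Fin.cons_succ, h4]
        · intro c hc
          simp only [mem_filter, mem_chains] at hc ⊢
          obtain ⟨⟨⟨h1, h2, h3⟩, h4⟩, h5⟩ := hc
          refine ⟨⟨fun i => h1 _, fun i => ?_, fun i => ?_⟩, ?_⟩
          · have := h2 i.succ
            simpa [Fin.tail, add_assoc, add_comm, add_left_comm] using this
          · exact h3 i.succ
          · simpa [Fin.tail] using h5
        · intro c hc
          simp
        · intro c hc
          simp only [mem_filter] at hc
          rw [← hc.1.2, Fin.cons_self_tail]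
        · intro c hc
          rw [← pow_add, Fin.sum_univ_succ]
          rfl
      · intro c hc
        simp only [mem_filter, mem_chains, mem_powerset] at hc ⊢
        exact ⟨hc.1.1 _, by simpa [hc.2] using hc.1.2.2 0⟩
    · rw [Finset.sum_eq_zero]
      intro c hc
      simp only [mem_filter, mem_chains] at hc
      exact absurd (by simpa [hc.2] using hc.1.2.1 0) h

open Classical in
/-- Chains of `r` steps whose paths end at the times given by the starting configuration. -/
noncomputable def cyclicChains (r : ℕ) : Finset (Fin (r + 1) → Finset ℕ) :=
  (Fintype.piFinset fun _ => (range r).powerset).filter fun c =>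
    (∀ i, #(c i) = geCount (c 0) i) ∧ ∀ i : Fin r, Interlaces (c i.castSucc) (c i.succ)

lemma mem_cyclicChains {r : ℕ} {c : Fin (r + 1) → Finset ℕ} :
    c ∈ cyclicChains r ↔ (∀ i, c i ⊆ range r) ∧ (∀ i, #(c i) = geCount (c 0) i) ∧
      ∀ i : Fin r, Interlaces (c i.castSucc) (c i.succ) := by
  simp [cyclicChains, Fintype.mem_piFinset]

lemma det_eq_sum_cyclicChains (r : ℕ) (q Q : R) :
    (1 + Matrix.of fun i j : Fin r => q * qP Q j i).det =
      ∑ c ∈ cyclicChains r, q ^ #(c 0) * Q ^ (∑ i : Fin r, ∑ x ∈ c i.castSucc, x) := by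
  classical
  rw [det_eq_sum_pathSum, ← Finset.sum_fiberwise_of_maps_to
    (s := cyclicChains r) (t := (range r).powerset) (g := fun c => c 0)]
  · refine Finset.sum_congr rfl fun S hS => ?_
    rw [mem_powerset] at hS
    rw [pathSum_eq_sum_chains _ _ _ _ _ _ hS, Finset.mul_sum]
    refine Finset.sum_congr ?_ fun c hc => ?_
    · ext c
      simp only [mem_filter, mem_chains, mem_cyclicChains]
      constructor
      · rintro ⟨⟨h1, h2, h3⟩, rfl⟩
        exact ⟨⟨h1, by simpa using h2, h3⟩, rfl⟩
      · rintro ⟨⟨h1, h2, h3⟩, rfl⟩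
        exact ⟨⟨h1, by simpa using h2, h3⟩, rfl⟩
    · rw [(mem_filter.1 hc).2]
  · intro c hc
    rw [mem_cyclicChains] at hc
    exact mem_powerset.2 (hc.1 0)
end

/-! ### Diagonals of cyclically symmetric down-sets -/

/-- A decidable down-set of natural numbers below `r` is determined by its size. -/
lemma initial_segment {P : ℕ → Prop} [DecidablePred P] {r : ℕ} (h1 : ∀ k, P (k + 1) → P k)
    (h2 : ∀ k, P k → k < r) (k : ℕ) : P k ↔ k < #{k ∈ range r | P k} := by
  have hmono : ∀ d k, P (k + d) → P k := by
    intro d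
    induction d with
    | zero => exact fun k h => h
    | succ d ih => exact fun k h => ih k (h1 _ h)
  constructor
  · intro hk
    have : range (k + 1) ⊆ {k ∈ range r | P k} := fun x hx => by
      have hx : x < k + 1 := mem_range.1 hx
      have : P x := hmono (k - x) x (by rwa [show x + (k - x) = k by omega])
      exact mem_filter.2 ⟨mem_range.2 (h2 x this), this⟩
    have := card_le_card this
    rw [card_range] at this
    omega
  · intro hk
    by_contra hP
    have : {k ∈ range r | P k} ⊆ range k := fun x hx => by
      have hx := (mem_filter.1 hx).2
      rw [mem_range]
      by_contra! hkx
      exact hP (hmono (x - k) k (by rwa [show k + (x - k) = x by omega]))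
    have := card_le_card this
    rw [card_range] at this
    omega

lemma geCount_succ (S : Finset ℕ) (a : ℕ) :
    geCount S a = geCount S (a + 1) + if a ∈ S then 1 else 0 := by
  have : {x ∈ S | a ≤ x} = {x ∈ S | a + 1 ≤ x} ∪ {x ∈ S | a = x} := by
    ext x
    simp only [mem_filter, mem_union]
    constructor
    · rintro ⟨h1, h2⟩
      rcases h2.lt_or_eq with h | h
      · exact .inl ⟨h1, h⟩
      · exact .inr ⟨h1, h⟩
    · rintro (⟨h1, h2⟩ | ⟨h1, h2⟩)
      · exact ⟨h1, by omega⟩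
      · exact ⟨h1, by omega⟩
  rw [geCount, this, card_union_of_disjoint, geCount]
  · congr 1
    rw [Finset.filter_eq]
    split_ifs <;> simp
  · rw [Finset.disjoint_left]
    intro x h1 h2
    have h1 := (mem_filter.1 h1).2
    have h2 := (mem_filter.1 h2).2
    omega

lemma geCount_zero (S : Finset ℕ) : geCount S 0 = #S := by
  simp [geCount]

lemma geCount_eq_zero {S : Finset ℕ} {r a : ℕ} (hS : S ⊆ range r) (ha : r ≤ a) :
    geCount S a = 0 := by
  rw [geCount, card_eq_zero, filter_eq_empty_iff]
  intro x hx
  have := mem_range.1 (hS hx)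
  omega

lemma mem_iff_geCount {S : Finset ℕ} {a : ℕ} : a ∈ S ↔ geCount S (a + 1) < geCount S a := by
  rw [geCount_succ S a]
  split_ifs with h <;> simp [h]

lemma ext_of_geCount {S T : Finset ℕ} (h : ∀ a, geCount S a = geCount T a) : S = T := by
  ext a
  rw [mem_iff_geCount, mem_iff_geCount, h, h]

/-- A sequence with descents at most one is the counting function of its descent set. -/
lemma geCount_descents {f : ℕ → ℕ} {r : ℕ} (h1 : ∀ a, f (a + 1) ≤ f a)
    (h2 : ∀ a, f a ≤ f (a + 1) + 1) (h3 : ∀ a, r ≤ a → f a = 0) (a : ℕ) :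
    geCount {x ∈ range r | f (x + 1) < f x} a = f a := by
  have key : ∀ d a, r ≤ a + d → geCount {x ∈ range r | f (x + 1) < f x} a = f a := by
    intro d
    induction d with
    | zero =>
      intro a ha
      rw [add_zero] at ha
      rw [geCount_eq_zero (filter_subset _ _) ha, h3 a ha]
    | succ d ih =>
      intro a ha
      rw [geCount_succ, ih (a + 1) (by omega)]
      have := h1 a
      have := h2 a
      split_ifs with h
      · have := (mem_filter.1 h).2
        omega
      · by_contra hne
        apply h
        refine mem_filter.2 ⟨mem_range.2 ?_, by omega⟩
        by_contra! hr
        rw [h3 a hr, h3 (a + 1) (by omega)] at hne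
        omega
  exact key r a (by omega)

lemma sum_eq_sum_geCount {S : Finset ℕ} {r : ℕ} (hS : S ⊆ range r) :
    ∑ x ∈ S, x = ∑ a ∈ range r, geCount S (a + 1) := by
  simp only [geCount, card_filter]
  rw [Finset.sum_comm]
  refine Finset.sum_congr rfl fun x hx => ?_
  rw [← card_filter]
  have hx := mem_range.1 (hS hx)
  have : {a ∈ range r | a + 1 ≤ x} = range x := by
    ext a
    simp only [mem_filter, mem_range]
    omega
  rw [this, card_range]

/-- A cyclically symmetric down-set of `{0, …, r - 1}³`. -/
structure CSDown (r : ℕ) (W : ℕ → ℕ → ℕ → Prop) : Prop where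
  lt : ∀ {i j k}, W i j k → i < r
  down : ∀ {i j k}, W (i + 1) j k → W i j k
  cyc : ∀ {i j k}, W i j k ↔ W k i j

lemma CSDown.lt₂ {r : ℕ} {W : ℕ → ℕ → ℕ → Prop} (h : CSDown r W) {i j k : ℕ} (hW : W i j k) :
    j < r :=
  h.lt (h.cyc.1 (h.cyc.1 hW))

lemma CSDown.lt₃ {r : ℕ} {W : ℕ → ℕ → ℕ → Prop} (h : CSDown r W) {i j k : ℕ} (hW : W i j k) :
    k < r :=
  h.lt (h.cyc.1 hW)

lemma CSDown.down₂ {r : ℕ} {W : ℕ → ℕ → ℕ → Prop} (h : CSDown r W) {i j k : ℕ}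
    (hW : W i (j + 1) k) : W i j k :=
  h.cyc.1 (h.down (h.cyc.1 (h.cyc.1 hW)))

lemma CSDown.down₃ {r : ℕ} {W : ℕ → ℕ → ℕ → Prop} (h : CSDown r W) {i j k : ℕ}
    (hW : W i j (k + 1)) : W i j k :=
  h.cyc.2 (h.down (h.cyc.1 hW))

open Classical in
/-- The number of cubes on the diagonal through `(a, b, 0)`. -/
noncomputable def diagCount (r : ℕ) (W : ℕ → ℕ → ℕ → Prop) (a b : ℕ) : ℕ :=
  #{k ∈ range r | W (k + a) (k + b) k}

lemma CSDown.iff_lt_diagCount {r : ℕ} {W : ℕ → ℕ → ℕ → Prop} (h : CSDown r W) (a b k : ℕ) :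
    W (k + a) (k + b) k ↔ k < diagCount r W a b := by
  classical
  rw [diagCount]
  convert initial_segment (P := fun k => W (k + a) (k + b) k) (r := r) ?_ ?_ k
  · intro k hk
    rw [add_right_comm, add_right_comm k 1 b] at hk
    exact h.down (h.down₂ (h.down₃ hk))
  · exact fun k hk => h.lt₃ hk

/-- The properties characterising the array of the diagonal lengths of a cyclically symmetric
down-set. -/
structure DiagArray (r : ℕ) (n : ℕ → ℕ → ℕ) : Prop where
  left : ∀ a b, n (a + 1) b ≤ n a b
  right : ∀ a b, n a (b + 1) ≤ n a b
  diag : ∀ a b, n a b ≤ n (a + 1) (b + 1) + 1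
  symm : ∀ a, n a 0 = n 0 a
  zero_left : ∀ a b, r ≤ a → n a b = 0
  zero_right : ∀ a b, r ≤ b → n a b = 0

lemma le_of_forall_lt_imp {m n : ℕ} (h : ∀ k, k < m → k < n) : m ≤ n := by
  by_contra! hlt
  exact lt_irrefl _ (h n hlt)

lemma CSDown.diagArray {r : ℕ} {W : ℕ → ℕ → ℕ → Prop} (h : CSDown r W) :
    DiagArray r (diagCount r W) where
  left a b := le_of_forall_lt_imp fun k hk => by
    rw [← h.iff_lt_diagCount] at hk ⊢
    exact h.down hk
  right a b := le_of_forall_lt_imp fun k hk => by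
    rw [← h.iff_lt_diagCount] at hk ⊢
    exact h.down₂ hk
  diag a b := le_of_forall_lt_imp fun k hk => by
    cases k with
    | zero => omega
    | succ k =>
      rw [← h.iff_lt_diagCount] at hk
      have hk := h.down₃ hk
      rw [add_assoc, add_comm 1, add_assoc, add_comm 1, h.iff_lt_diagCount] at hk
      omega
  symm a := by
    apply le_antisymm <;> refine le_of_forall_lt_imp fun k hk => ?_ <;>
      rw [← h.iff_lt_diagCount] at hk ⊢
    · exact h.cyc.1 hk
    · exact h.cyc.2 hk
  zero_left a b hr := by
    by_contra hne
    have := h.lt ((h.iff_lt_diagCount a b 0).2 (by omega))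
    omega
  zero_right a b hr := by
    by_contra hne
    have := h.lt₂ ((h.iff_lt_diagCount a b 0).2 (by omega))
    omega

lemma DiagArray.lt {r : ℕ} {n : ℕ → ℕ → ℕ} (h : DiagArray r n) (k : ℕ) : ∀ a b, k < n a b →
    k + a < r ∧ k + b < r := by
  induction k with
  | zero =>
    intro a b hk
    by_contra hlt
    rcases Nat.lt_or_ge a r with ha | ha
    · rw [h.zero_right a b (by omega)] at hk
      omega
    · rw [h.zero_left a b ha] at hk
      omega
  | succ k ih =>
    intro a b hk
    have := h.diag a b
    have := ih (a + 1) (b + 1) (by omega)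
    omega

/-- The set of cubes with prescribed diagonal lengths: `n` gives the cubes `(i, j, k)` with
`k` minimal, and the other ones are given by rotation. -/
def cubes (n : ℕ → ℕ → ℕ) (i j k : ℕ) : Prop :=
  if k ≤ i ∧ k ≤ j then k < n (i - k) (j - k)
  else if i ≤ j ∧ i ≤ k then i < n (j - i) (k - i)
  else j < n (k - j) (i - j)

lemma cubes_third {n : ℕ → ℕ → ℕ} {i j k : ℕ} (h1 : k ≤ i) (h2 : k ≤ j) :
    cubes n i j k ↔ k < n (i - k) (j - k) := by
  rw [cubes, if_pos ⟨h1, h2⟩]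

lemma DiagArray.cubes_first {r : ℕ} {n : ℕ → ℕ → ℕ} (h : DiagArray r n) {i j k : ℕ} (h1 : i ≤ j)
    (h2 : i ≤ k) : cubes n i j k ↔ i < n (j - i) (k - i) := by
  by_cases hk : k ≤ i ∧ k ≤ j
  · obtain rfl : i = k := le_antisymm h2 hk.1
    rw [cubes_third le_rfl h1, Nat.sub_self, h.symm]
  · rw [cubes, if_neg hk, if_pos ⟨h1, h2⟩]

lemma DiagArray.cubes_second {r : ℕ} {n : ℕ → ℕ → ℕ} (h : DiagArray r n) {i j k : ℕ} (h1 : j ≤ i)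
    (h2 : j ≤ k) : cubes n i j k ↔ j < n (k - j) (i - j) := by
  by_cases hk : k ≤ i ∧ k ≤ j
  · obtain rfl : j = k := le_antisymm h2 hk.2
    rw [cubes_third h1 le_rfl, Nat.sub_self, h.symm]
  · by_cases hi : i ≤ j ∧ i ≤ k
    · obtain rfl : i = j := le_antisymm hi.1 h1
      rw [h.cubes_first le_rfl h2, Nat.sub_self, h.symm]
    · rw [cubes, if_neg hk, if_neg hi]

lemma DiagArray.cubes_cyc {r : ℕ} {n : ℕ → ℕ → ℕ} (h : DiagArray r n) {i j k : ℕ} :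
    cubes n i j k ↔ cubes n k i j := by
  by_cases hk : k ≤ i ∧ k ≤ j
  · rw [cubes_third hk.1 hk.2, h.cubes_first hk.1 hk.2]
  · by_cases hi : i ≤ j ∧ i ≤ k
    · rw [h.cubes_first hi.1 hi.2, h.cubes_second hi.2 hi.1]
    · have h1 : j ≤ i := by omega
      have h2 : j ≤ k := by omega
      rw [h.cubes_second h1 h2, cubes_third h2 h1]

lemma DiagArray.csDown {r : ℕ} {n : ℕ → ℕ → ℕ} (h : DiagArray r n) : CSDown r (cubes n) where
  lt {i j k} hW := by
    by_cases hk : k ≤ i ∧ k ≤ j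
    · rw [cubes_third hk.1 hk.2] at hW
      have := h.lt _ _ _ hW
      omega
    · by_cases hi : i ≤ j ∧ i ≤ k
      · rw [h.cubes_first hi.1 hi.2] at hW
        have := h.lt _ _ _ hW
        omega
      · rw [h.cubes_second (by omega) (by omega)] at hW
        have := h.lt _ _ _ hW
        omega
  down {i j k} hW := by
    by_cases hk : k ≤ i ∧ k ≤ j
    · rw [cubes_third (by omega) hk.2, Nat.sub_add_comm hk.1] at hW
      rw [cubes_third hk.1 hk.2]
      exact hW.trans_le (h.left _ _)
    · by_cases hj : j ≤ i ∧ j ≤ k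
      · rw [h.cubes_second (by omega) hj.2, Nat.sub_add_comm hj.1] at hW
        rw [h.cubes_second hj.1 hj.2]
        exact hW.trans_le (h.right _ _)
        -- `i` is the strict minimum, hence `i + 1` is still a minimum
      · rw [h.cubes_first (by omega) (by omega)] at hW
        rw [h.cubes_first (by omega) (by omega)]
        rw [show j - i = j - (i + 1) + 1 by omega, show k - i = k - (i + 1) + 1 by omega]
        have := h.diag (j - (i + 1)) (k - (i + 1))
        omega
  cyc := h.cubes_cyc

lemma DiagArray.diagCount_cubes {r : ℕ} {n : ℕ → ℕ → ℕ} (h : DiagArray r n) (a b : ℕ) :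
    diagCount r (cubes n) a b = n a b := by
  have : ∀ k, k < diagCount r (cubes n) a b ↔ k < n a b := fun k => by
    rw [← h.csDown.iff_lt_diagCount, cubes_third (by omega) (by omega), Nat.add_sub_cancel_left,
      Nat.add_sub_cancel_left]
  exact le_antisymm (le_of_forall_lt_imp fun k => (this k).1)
    (le_of_forall_lt_imp fun k => (this k).2)

/-- A cyclically symmetric down-set is determined by its diagonal lengths. -/
lemma CSDown.ext {r : ℕ} {W W' : ℕ → ℕ → ℕ → Prop} (h : CSDown r W) (h' : CSDown r W')
    (hn : ∀ a b, diagCount r W a b = diagCount r W' a b) (i j k : ℕ) : W i j k ↔ W' i j k := by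
  have key : ∀ i j k, k ≤ i → k ≤ j → (W i j k ↔ W' i j k) := fun i j k h1 h2 => by
    have e1 := h.iff_lt_diagCount (i - k) (j - k) k
    have e2 := h'.iff_lt_diagCount (i - k) (j - k) k
    rw [Nat.add_sub_cancel' h1, Nat.add_sub_cancel' h2] at e1 e2
    rw [e1, e2, hn]
  by_cases hk : k ≤ i ∧ k ≤ j
  · exact key i j k hk.1 hk.2
  · by_cases hj : j ≤ i ∧ j ≤ k
    · rw [h.cyc, h'.cyc]
      exact key k i j hj.2 hj.1
    · rw [h.cyc, h'.cyc, h.cyc, h'.cyc]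
      exact key j k i (by omega) (by omega)

/-! ### Plane partitions, chains, and the variance -/

/-- The set of cubes of a plane partition. -/
def cubeSet {r : ℕ} (p : Fin r → Fin r → Fin (r + 1)) (i j k : ℕ) : Prop :=
  ∃ (hi : i < r) (hj : j < r), k < (p ⟨i, hi⟩ ⟨j, hj⟩ : ℕ)

lemma cubeSet_coe {r : ℕ} (p : Fin r → Fin r → Fin (r + 1)) (i j : Fin r) (k : ℕ) :
    cubeSet p i j k ↔ k < (p i j : ℕ) :=
  ⟨fun ⟨_, _, h⟩ => h, fun h => ⟨i.2, j.2, h⟩⟩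

lemma csDown_cubeSet {r : ℕ} {p : Fin r → Fin r → Fin (r + 1)} (hp : p ∈ CSPP r) :
    CSDown r (cubeSet p) := by
  simp only [CSPP, PP, mem_filter, mem_univ, true_and] at hp
  obtain ⟨h1, h2⟩ := hp
  refine ⟨fun ⟨hi, _, _⟩ => hi, ?_, ?_⟩
  · rintro i j k ⟨hi, hj, hk⟩
    exact ⟨by omega, hj, hk.trans_le (h1 _ _ _ _ (by simp [Fin.le_def]) le_rfl)⟩
  · intro i j k
    constructor
    · rintro ⟨hi, hj, hk⟩
      have hkr : k < r := by have := (p ⟨i, hi⟩ ⟨j, hj⟩).2; omega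
      exact ⟨hkr, hi, (h2 ⟨i, hi⟩ ⟨j, hj⟩ ⟨k, hkr⟩).1 hk⟩
    · rintro ⟨hk, hi, hj⟩
      have hjr : j < r := by have := (p ⟨k, hk⟩ ⟨i, hi⟩).2; omega
      exact ⟨hi, hjr, (h2 ⟨i, hi⟩ ⟨j, hjr⟩ ⟨k, hk⟩).2 hj⟩

/-- Every cyclically symmetric down-set is the set of cubes of a plane partition. -/
lemma CSDown.exists_cspp {r : ℕ} {W : ℕ → ℕ → ℕ → Prop} (h : CSDown r W) :
    ∃ p ∈ CSPP r, ∀ i j k, cubeSet p i j k ↔ W i j k := by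
  classical
  let p : Fin r → Fin r → Fin (r + 1) := fun i j =>
    ⟨#{k ∈ range r | W i j k}, Nat.lt_succ_of_le ((card_filter_le _ _).trans_eq (card_range r))⟩
  have hp : ∀ (i j : Fin r) (k : ℕ), k < (p i j : ℕ) ↔ W i j k := fun i j k =>
    (initial_segment (P := fun k => W i j k) (fun k hk => h.down₃ hk) (fun k hk => h.lt₃ hk) k).symm
  have hdown : ∀ d i j k, W (i + d) j k → W i j k := by
    intro d
    induction d with
    | zero => exact fun _ _ _ h => h
    | succ d ih => exact fun i j k hW => ih i j k (h.down hW)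
  have hdown₂ : ∀ d i j k, W i (j + d) k → W i j k := by
    intro d
    induction d with
    | zero => exact fun _ _ _ h => h
    | succ d ih => exact fun i j k hW => ih i j k (h.down₂ hW)
  refine ⟨p, ?_, fun i j k => ⟨fun ⟨hi, hj, hk⟩ => (hp _ _ _).1 hk, fun hW =>
    ⟨h.lt hW, h.lt₂ hW, (hp _ _ _).2 hW⟩⟩⟩
  simp only [CSPP, PP, mem_filter, mem_univ, true_and]
  refine ⟨fun i i' j j' hi hj => le_of_forall_lt_imp fun k hk => ?_, fun i j k => ?_⟩
  · rw [hp] at hk ⊢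
    apply hdown (i' - i)
    apply hdown₂ (j' - j)
    rwa [Nat.add_sub_cancel' hi, Nat.add_sub_cancel' hj]
  · rw [hp, hp]
    exact h.cyc

/-- The particle configurations encoding a cyclically symmetric set of cubes: the lengths of the
diagonals through `(a, b, 0)` form for fixed `b` a sequence in `a` with descents at most one, and
the configuration at time `b` records the positions of the descents. -/
noncomputable def toChain {r : ℕ} (p : Fin r → Fin r → Fin (r + 1)) (b : Fin (r + 1)) :
    Finset ℕ :=
  {a ∈ range r | diagCount r (cubeSet p) (a + 1) b < diagCount r (cubeSet p) a b}

lemma geCount_toChain {r : ℕ} {p : Fin r → Fin r → Fin (r + 1)} (hp : p ∈ CSPP r)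
    (b : Fin (r + 1)) (a : ℕ) : geCount (toChain p b) a = diagCount r (cubeSet p) a b := by
  have h := (csDown_cubeSet hp).diagArray
  exact geCount_descents (f := fun a => diagCount r (cubeSet p) a b) (fun a => h.left a b)
    (fun a => (h.diag a b).trans (Nat.add_le_add_right (h.right _ _) 1))
    (fun a ha => h.zero_left a b ha) a

lemma toChain_mem {r : ℕ} {p : Fin r → Fin r → Fin (r + 1)} (hp : p ∈ CSPP r) :
    toChain p ∈ cyclicChains r := by
  have h := (csDown_cubeSet hp).diagArray
  rw [mem_cyclicChains]
  refine ⟨fun i => filter_subset _ _, fun i => ?_, fun i a => ?_⟩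
  · rw [← geCount_zero, geCount_toChain hp, geCount_toChain hp, ← h.symm]
    rfl
  · rw [geCount_toChain hp, geCount_toChain hp, geCount_toChain hp]
    exact ⟨h.right _ _, h.diag _ _⟩

lemma toChain_injOn {r : ℕ} {p p' : Fin r → Fin r → Fin (r + 1)} (hp : p ∈ CSPP r)
    (hp' : p' ∈ CSPP r) (h : toChain p = toChain p') : p = p' := by
  have hW := (csDown_cubeSet hp).ext (csDown_cubeSet hp') fun a b => by
    rcases Nat.lt_or_ge b (r + 1) with hb | hb
    · rw [← geCount_toChain hp ⟨b, hb⟩, ← geCount_toChain hp' ⟨b, hb⟩, h]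
    · rw [(csDown_cubeSet hp).diagArray.zero_right a b (by omega),
        (csDown_cubeSet hp').diagArray.zero_right a b (by omega)]
  funext i j
  apply Fin.ext
  apply le_antisymm <;> refine le_of_forall_lt_imp fun k hk => ?_ <;> rw [← cubeSet_coe] at hk ⊢
  · exact (hW _ _ _).1 hk
  · exact (hW _ _ _).2 hk

lemma geCount_anti (S : Finset ℕ) (a : ℕ) : geCount S (a + 1) ≤ geCount S a := by
  rw [geCount_succ S a]
  omega

/-- The counting functions of a chain form the array of diagonal lengths of some set of cubes. -/
lemma diagArray_of_chain {r : ℕ} {c : Fin (r + 1) → Finset ℕ} (hc : c ∈ cyclicChains r) :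
    DiagArray r fun a b => if h : b < r + 1 then geCount (c ⟨b, h⟩) a else 0 := by
  rw [mem_cyclicChains] at hc
  obtain ⟨h1, h2, h3⟩ := hc
  have hr : ∀ a, geCount (c (Fin.last r)) a = 0 := fun a => by
    have e := h2 (Fin.last r)
    rw [geCount_eq_zero (h1 0) (by simp)] at e
    have := geCount_le_card (c (Fin.last r)) a
    omega
  have hstep : ∀ b (hb : b < r) a, geCount (c ⟨b + 1, by omega⟩) a ≤ geCount (c ⟨b, by omega⟩) a ∧
      geCount (c ⟨b, by omega⟩) a ≤ geCount (c ⟨b + 1, by omega⟩) (a + 1) + 1 :=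
    fun b hb a => h3 ⟨b, hb⟩ a
  refine ⟨fun a b => ?_, fun a b => ?_, fun a b => ?_, fun a => ?_, fun a b ha => ?_,
    fun a b hb => ?_⟩
  · split_ifs
    · exact geCount_anti _ _
    · exact le_rfl
  · by_cases hb : b < r
    · rw [dif_pos (by omega), dif_pos (by omega)]
      exact (hstep b hb a).1
    · rw [dif_neg (by omega)]
      exact Nat.zero_le _
  · by_cases hb : b < r
    · rw [dif_pos (by omega), dif_pos (by omega)]
      exact (hstep b hb a).2
    · split_ifs with h h'
      · omega
      · have : (⟨b, h⟩ : Fin (r + 1)) = Fin.last r := Fin.ext (by simp; omega)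
        rw [this, hr]
        omega
      · omega
      · omega
  · rw [dif_pos (Nat.succ_pos r)]
    split_ifs with h
    · rw [geCount_zero, h2]
      rfl
    · exact geCount_eq_zero (h1 _) (by omega)
  · split_ifs with h
    · exact geCount_eq_zero (h1 _) ha
    · rfl
  · split_ifs with h
    · have : (⟨b, h⟩ : Fin (r + 1)) = Fin.last r := Fin.ext (by simp; omega)
      rw [this, hr]
    · rfl

lemma diagCount_congr {r : ℕ} {W W' : ℕ → ℕ → ℕ → Prop} (h : ∀ i j k, W i j k ↔ W' i j k)
    (a b : ℕ) : diagCount r W a b = diagCount r W' a b := by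
  have : W = W' := by funext i j k; exact propext (h i j k)
  rw [this]

lemma toChain_surjOn {r : ℕ} {c : Fin (r + 1) → Finset ℕ} (hc : c ∈ cyclicChains r) :
    ∃ p, ∃ _ : p ∈ CSPP r, toChain p = c := by
  have h := diagArray_of_chain hc
  obtain ⟨p, hp, hW⟩ := h.csDown.exists_cspp
  refine ⟨p, hp, ?_⟩
  funext b
  refine ext_of_geCount fun a => ?_
  rw [geCount_toChain hp, diagCount_congr hW, h.diagCount_cubes, dif_pos b.2]

lemma sum_shift {r k : ℕ} {g : ℕ → ℕ} (hg : ∀ i, r ≤ i → g i = 0) :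
    (∑ i ∈ range r, if k ≤ i then g i else 0) = ∑ a ∈ range r, g (k + a) := by
  have : ∑ a ∈ range r, g (k + a) = ∑ i ∈ Ico k (k + r), g i := by
    rw [Finset.sum_Ico_eq_sum_range, Nat.add_sub_cancel_left]
  rw [this, ← Finset.sum_filter]
  apply Finset.sum_subset
  · intro i hi
    simp only [mem_filter, mem_range, mem_Ico] at hi ⊢
    omega
  · intro i hi hi'
    apply hg
    simp only [mem_filter, mem_range, mem_Ico] at hi hi'
    omega

open Classical in
/-- The number of cubes off the main diagonal is three times the number of cubes `(i, j, k)` with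
`k < i` and `k ≤ j`, since these form a fundamental domain for the rotation. -/
lemma CSDown.card_cubes {r : ℕ} {W : ℕ → ℕ → ℕ → Prop} (h : CSDown r W) :
    (∑ i ∈ range r, ∑ j ∈ range r, ∑ k ∈ range r, if W i j k then 1 else 0) =
      diagCount r W 0 0 + 3 * ∑ b ∈ range r, ∑ a ∈ range r, diagCount r W (a + 1) b := by
  let w : ℕ → ℕ → ℕ → ℕ := fun i j k => if W i j k then 1 else 0
  let A : ℕ → ℕ → ℕ → ℕ := fun i j k => if k + 1 ≤ i then (if k ≤ j then w i j k else 0) else 0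
  have hw : ∀ i j k, w i j k = w k i j := fun i j k => by
    simp only [w, h.cyc (i := i) (j := j) (k := k)]
  have hsplit : ∀ i j k, w i j k =
      A i j k + A j k i + A k i j + if i = j then (if j = k then w i j k else 0) else 0 := by
    intro i j k
    have e1 : w j k i = w i j k := hw j k i
    have e2 : w k i j = w i j k := (hw i j k).symm
    simp only [A, e1, e2]
    split_ifs <;> omega
  have hd : ∀ a b, diagCount r W a b = ∑ k ∈ range r, w (k + a) (k + b) k := fun a b => by
    rw [diagCount, card_filter]
  have hA : ∑ i ∈ range r, ∑ j ∈ range r, ∑ k ∈ range r, A i j k =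
      ∑ b ∈ range r, ∑ a ∈ range r, diagCount r W (a + 1) b := by
    have e : ∀ k, ∑ i ∈ range r, ∑ j ∈ range r, A i j k =
        ∑ a ∈ range r, ∑ b ∈ range r, w (k + (a + 1)) (k + b) k := by
      intro k
      have : ∀ i, ∑ j ∈ range r, A i j k =
          if k + 1 ≤ i then ∑ b ∈ range r, w i (k + b) k else 0 := by
        intro i
        simp only [A]
        split_ifs with hi
        · refine sum_shift (g := fun j => w i j k) fun j hj => ?_
          exact if_neg fun hW => by have := h.lt₂ hW; omega
        · simp
      simp only [this]
      rw [sum_shift (g := fun i => ∑ b ∈ range r, w i (k + b) k)]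
      · refine Finset.sum_congr rfl fun a _ => Finset.sum_congr rfl fun b _ => ?_
        rw [show k + 1 + a = k + (a + 1) by ring]
      · intro i hi
        exact Finset.sum_eq_zero fun b _ => if_neg fun hW => by have := h.lt hW; omega
    simp only [hd]
    calc ∑ i ∈ range r, ∑ j ∈ range r, ∑ k ∈ range r, A i j k
        = ∑ i ∈ range r, ∑ k ∈ range r, ∑ j ∈ range r, A i j k :=
          Finset.sum_congr rfl fun i _ => Finset.sum_comm
      _ = ∑ k ∈ range r, ∑ i ∈ range r, ∑ j ∈ range r, A i j k := Finset.sum_comm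
      _ = ∑ k ∈ range r, ∑ a ∈ range r, ∑ b ∈ range r, w (k + (a + 1)) (k + b) k :=
          Finset.sum_congr rfl fun k _ => e k
      _ = ∑ a ∈ range r, ∑ k ∈ range r, ∑ b ∈ range r, w (k + (a + 1)) (k + b) k :=
          Finset.sum_comm
      _ = ∑ a ∈ range r, ∑ b ∈ range r, ∑ k ∈ range r, w (k + (a + 1)) (k + b) k :=
          Finset.sum_congr rfl fun i _ => Finset.sum_comm
      _ = _ := Finset.sum_comm
  have hA2 : ∑ i ∈ range r, ∑ j ∈ range r, ∑ k ∈ range r, A j k i =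
      ∑ i ∈ range r, ∑ j ∈ range r, ∑ k ∈ range r, A i j k := by
    rw [Finset.sum_comm]
    exact Finset.sum_congr rfl fun i _ => Finset.sum_comm
  have hA3 : ∑ i ∈ range r, ∑ j ∈ range r, ∑ k ∈ range r, A k i j =
      ∑ i ∈ range r, ∑ j ∈ range r, ∑ k ∈ range r, A i j k := by
    exact (Finset.sum_congr rfl fun i _ => Finset.sum_comm).trans Finset.sum_comm
  have hD : ∑ i ∈ range r, ∑ j ∈ range r, ∑ k ∈ range r,
      (if i = j then (if j = k then w i j k else 0) else 0) = diagCount r W 0 0 := by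
    rw [hd]
    refine Finset.sum_congr rfl fun i hi => ?_
    rw [Finset.sum_eq_single_of_mem i hi, Finset.sum_eq_single_of_mem i hi]
    · simp
    · intro k _ hk
      simp [hk.symm]
    · intro j _ hj
      simp [hj.symm]
  change ∑ i ∈ range r, ∑ j ∈ range r, ∑ k ∈ range r, w i j k = _
  have hsum : ∑ i ∈ range r, ∑ j ∈ range r, ∑ k ∈ range r, w i j k =
      ∑ i ∈ range r, ∑ j ∈ range r, ∑ k ∈ range r, (A i j k + A j k i + A k i j +
        if i = j then (if j = k then w i j k else 0) else 0) :=
    Finset.sum_congr rfl fun i _ => Finset.sum_congr rfl fun j _ =>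
      Finset.sum_congr rfl fun k _ => hsplit i j k
  rw [hsum]
  simp only [Finset.sum_add_distrib]
  rw [hA2, hA3, hD, hA]
  ring

/-- The volume in terms of the particle configurations. -/
lemma vol_eq {r : ℕ} {p : Fin r → Fin r → Fin (r + 1)} (hp : p ∈ CSPP r) :
    vol p = #(toChain p 0) + 3 * ∑ i : Fin r, ∑ x ∈ toChain p i.castSucc, x := by
  classical
  have h := csDown_cubeSet hp
  have h1 : vol p = ∑ i ∈ range r, ∑ j ∈ range r, ∑ k ∈ range r,
      if cubeSet p i j k then 1 else 0 := by
    simp only [vol]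
    rw [Finset.sum_range]
    refine Finset.sum_congr rfl fun i _ => ?_
    rw [Finset.sum_range]
    refine Finset.sum_congr rfl fun j _ => ?_
    simp only [cubeSet_coe]
    rw [← card_filter]
    have : {k ∈ range r | k < (p i j : ℕ)} = range (p i j : ℕ) := by
      ext k
      have := (p i j).2
      simp only [mem_filter, mem_range]
      omega
    rw [this, card_range]
  rw [h1, h.card_cubes, ← geCount_zero, geCount_toChain hp, Finset.sum_range]
  congr 2
  refine Finset.sum_congr rfl fun i _ => ?_
  rw [sum_eq_sum_geCount (S := toChain p i.castSucc) (filter_subset _ _)]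
  refine Finset.sum_congr rfl fun a _ => ?_
  rw [geCount_toChain hp]
  rfl

/-- The volume generating function of cyclically symmetric plane partitions. -/
lemma sum_cspp_eq_det {R : Type*} [CommRing R] (r : ℕ) (q : R) :
    ∑ p ∈ CSPP r, q ^ vol p = (1 + Matrix.of fun i j : Fin r => q * qP (q ^ 3) j i).det := by
  rw [det_eq_sum_cyclicChains]
  refine Finset.sum_bij (fun p _ => toChain p) (fun p hp => toChain_mem hp)
    (fun p hp p' hp' h => toChain_injOn hp hp' h) (fun c hc => toChain_surjOn hc) fun p hp => ?_
  rw [vol_eq hp, pow_add, pow_mul]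

open Polynomial in
/-- Number, first and second moment of the volume, read off from the jet at `X = 1` of the
generating function `∑ X ^ (2 * vol p)` under the derivation `qD`, which multiplies
`X ^ (2 * v)` by `v`. -/
lemma cspp_moments (n : ℕ) :
    let d := (MM (n + 1)).det
    ((CSPP (n + 1)).card : ℝ) = d ∧
    ∑ p ∈ CSPP (n + 1), (vol p : ℝ) = d * ((n + 1 : ℝ) ^ 3 / 2) ∧
    ∑ p ∈ CSPP (n + 1), (vol p : ℝ) ^ 2 = d * (((n + 1 : ℝ) ^ 3 / 2) ^ 2 +
      (3 / 4 * (n + 1 : ℝ) ^ 4 - 1 / 2 * (n + 1 : ℝ) ^ 2)) := by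
  intro d
  have hD : (1 + Matrix.of fun i j : Fin (n + 1) => (X : ℝ[X]) ^ 2 * qP (X ^ 6) j i).det =
      ∑ p ∈ CSPP (n + 1), (X : ℝ[X]) ^ (2 * vol p) := by
    have := sum_cspp_eq_det (n + 1) ((X : ℝ[X]) ^ 2)
    rw [← pow_mul] at this
    simp only [← pow_mul] at this
    simpa using this.symm
  obtain ⟨h0, h1, h2⟩ := gf_jets n
  rw [hD] at h0 h1 h2
  have hq : ∀ m : ℕ, qD ((X : ℝ[X]) ^ (2 * m)) = C (m : ℝ) * X ^ (2 * m) := fun m => by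
    rw [qD_X_pow]
    congr 2
    push_cast
    ring
  refine ⟨?_, ?_, ?_⟩
  · refine Eq.trans ?_ h0
    simp [ev1]
  · refine Eq.trans ?_ h1
    simp [ev1, hq]
  · refine Eq.trans ?_ h2
    simp only [map_sum, hq, qD_C_mul]
    simp [ev1, sq]

/-- The variance of the volume of a uniformly random cyclically symmetric plane
partition in an `(r,r,r)`-box equals `(3/4)r⁴ − (1/2)r²`. -/
theorem variance_volume_CSPP (r : ℕ) (hr : 0 < r) :
    varCSPP r = (3 / 4 : ℝ) * r ^ 4 - (1 / 2 : ℝ) * r ^ 2 := by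
  obtain ⟨n, rfl⟩ : ∃ n, r = n + 1 := ⟨r - 1, by omega⟩
  obtain ⟨e0, e1, e2⟩ := cspp_moments n
  have hd := MM_det_ne_zero (n + 1)
  set d := (MM (n + 1)).det
  have hmean : meanCSPP (n + 1) = (n + 1 : ℝ) ^ 3 / 2 := by
    rw [meanCSPP, e1, e0, mul_div_cancel_left₀ _ hd]
  rw [varCSPP, hmean, e0]
  have : ∑ p ∈ CSPP (n + 1), ((vol p : ℝ) - (n + 1 : ℝ) ^ 3 / 2) ^ 2 =
      ∑ p ∈ CSPP (n + 1), (vol p : ℝ) ^ 2 - (n + 1 : ℝ) ^ 3 * ∑ p ∈ CSPP (n + 1), (vol p : ℝ) +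
        ((n + 1 : ℝ) ^ 3 / 2) ^ 2 * ((CSPP (n + 1)).card : ℝ) := by
    rw [Finset.mul_sum, ← Finset.sum_sub_distrib, mul_comm _ ((CSPP (n + 1)).card : ℝ),
      ← nsmul_eq_mul, ← Finset.sum_const, ← Finset.sum_add_distrib]
    refine Finset.sum_congr rfl fun p _ => ?_
    ring
  rw [this, e0, e1, e2]
  push_cast
  field_simp
  ring
end
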